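/- The growth rate of the monoid F_+(p) exists and equals a number ζ_p satisfying p < ζ_p < p + 1/2 and (ζ_p² − 1)^{p−1}·(ζ_p² + ζ_p − 1) = ζ_p^{2p}. That is, the limit ζ_p = lim_{n→∞} (#(F_+(p) ∩ B(n)))^{1/n} exists, lies strictly between p and p + 1/2, and is a root of the equation (y² − 1)^{p−1}(y² + y − 1) = y^{2p}. -/

import Mathlib

/-- Relators of the generalized Thompson group `F(p)`. -/
def ThompsonRels (p : ℕ) : Set (FreeGroup ℕ) :=
  {r | ∃ i j : ℕ, i < j ∧
    r = FreeGroup.of j * FreeGroup.of i * (FreeGroup.of (j + p - 1))⁻¹ * (FreeGroup.of i)⁻¹}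

/-- The generalized Thompson group `F(p)` as a presented group. -/
abbrev FP (p : ℕ) := PresentedGroup (ThompsonRels p)

/-- The generator `x_i` of `F(p)`. -/
def xgen (p : ℕ) (i : ℕ) : FP p := PresentedGroup.of i

/-- Word length of `g ∈ F(p)` with respect to `x_0, …, x_{p−1}`: the least `n`
such that `g` is a product of `n` elements of `{x_0^{±1}, …, x_{p−1}^{±1}}`. -/
noncomputable def wlen (p : ℕ) (g : FP p) : ℕ :=
  sInf {n | ∃ l : List (FP p), l.length = n ∧
    (∀ a ∈ l, ∃ i < p, a = xgen p i ∨ a = (xgen p i)⁻¹) ∧ l.prod = g}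

/-- The submonoid `F₊(p)` of positive elements, generated by all `x_i`. -/
def Fplus (p : ℕ) : Submonoid (FP p) := Submonoid.closure (Set.range (xgen p))

/-!
Write `q = p - 1`. A positive element is `x_0 ^ a` times the element of a forest of `(q + 1)`-ary
trees, and the trees are grouped into blocks of `q`. Conjugating with `x_0` moves from block to
block, so an element with as many letters `x_0` as blocks can be spelled with length at most the
total weight of the blocks, where a caret weighs `1`, or `3` if it reaches into the next block.
Conversely, let a word for the element act on addresses (an integer position together with an
infinite path in the `(q + 1)`-ary tree). Each letter moves at most one of the tracked points past
the start of a block, and every block and every caret forces such passages, so up to an additive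
constant no spelling is shorter than the weight.

Up to polynomial factors the ball therefore counts lists of blocks by weight, and the growth rate is
`ζ` as soon as the generating function of the blocks takes the value `1` at `t = ζ⁻¹`. The
generating functions of the trees are the least fixed point of an explicit operator. If
`(1 - t²)^q (1 + t - t²) = 1`, that operator has a fixed point at which the generating function of
the blocks is `1`, which bounds the generating function above. By Bernoulli's inequality there is
no smaller fixed point when `p t < 1`.
-/

namespace GeneralizedThompson

/-! ### Counting words by weight -/

section Words

open Filter Topology
open scoped ENNReal

variable {α : Type*} {w : α → ℕ}

/-- The weight of a word whose letters `a` have weights `w a`. -/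
def listWeight (w : α → ℕ) (l : List α) : ℕ := (l.map w).sum

/-- The words of weight `n`. -/
def wordsOfWeight (w : α → ℕ) (n : ℕ) : Set (List α) := {l | listWeight w l = n}

/-- The number of words of weight `n`. This is meaningful only if `wordsOfWeight w n` is finite, as
`Set.ncard` is `0` on infinite sets. -/
noncomputable def wordCount (w : α → ℕ) (n : ℕ) : ℕ := (wordsOfWeight w n).ncard

lemma listWeight_cons (a : α) (l : List α) :
    listWeight w (a :: l) = w a + listWeight w l := by
  simp [listWeight]

lemma listWeight_append (l₁ l₂ : List α) :
    listWeight w (l₁ ++ l₂) = listWeight w l₁ + listWeight w l₂ := by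
  simp [listWeight]

lemma listWeight_replicate (n : ℕ) (a : α) : listWeight w (List.replicate n a) = n * w a := by
  simp [listWeight]

lemma length_le_listWeight (hw : ∀ a, 0 < w a) (l : List α) : l.length ≤ listWeight w l := by
  simpa [listWeight] using (l.map w).length_le_sum_of_one_le fun _ hm => by
    obtain ⟨a, -, rfl⟩ := List.mem_map.1 hm
    exact hw a

lemma append_injOn_weight (hw : ∀ a, 0 < w a) {l₁ l₁' l₂ l₂' : List α}
    (h : l₁ ++ l₂ = l₁' ++ l₂') (hwt : listWeight w l₁ = listWeight w l₁') :
    l₁ = l₁' ∧ l₂ = l₂' := by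
  have nil_of_weight (l : List α) (hl : listWeight w l = 0) : l = [] :=
    List.length_eq_zero_iff.1 (Nat.le_zero.1 (hl ▸ length_le_listWeight hw l))
  rcases List.append_eq_append_iff.1 h with ⟨m, rfl, rfl⟩ | ⟨m, rfl, rfl⟩
  · rw [listWeight_append] at hwt
    obtain rfl := nil_of_weight m (by lia)
    simp
  · rw [listWeight_append] at hwt
    obtain rfl := nil_of_weight m (by lia)
    simp

lemma tsum_pow_weight_tuple (t : ℝ≥0∞) (n : ℕ) :
    ∑' v : Fin n → α, t ^ listWeight w (List.ofFn v) = (∑' a, t ^ w a) ^ n := by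
  induction n with
  | zero => simp [listWeight]
  | succ n ih =>
    rw [← (Fin.consEquiv fun _ => α).tsum_eq, ENNReal.tsum_prod', pow_succ', ← ih,
      ← ENNReal.tsum_mul_right]
    simp [Fin.consEquiv, listWeight_cons, pow_add, ENNReal.tsum_mul_left]

lemma tsum_list (f : List α → ℝ≥0∞) : ∑' l, f l = ∑' n, ∑' v : Fin n → α, f (List.ofFn v) := by
  rw [← List.equivSigmaTuple.symm.tsum_eq, ENNReal.tsum_sigma']
  rfl

lemma tsum_pow_listWeight_eq_top {t : ℝ≥0∞} (ht : ∑' a, t ^ w a = 1) :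
    ∑' l, t ^ listWeight w l = ∞ := by
  simp_rw [tsum_list, tsum_pow_weight_tuple, ht, one_pow]
  exact ENNReal.tsum_const_eq_top_of_ne_zero one_ne_zero

lemma encard_wordsOfWeight_mul_pow_le (hw : ∀ a, 0 < w a) {t : ℝ≥0∞} (ht : ∑' a, t ^ w a = 1)
    (n : ℕ) : (wordsOfWeight w n).encard * t ^ n ≤ n + 1 := by
  have sum_len (m : ℕ) : ∑' v : Fin m → α,
      (wordsOfWeight w n).indicator (fun _ => t ^ n) (List.ofFn v) ≤
        if m ∈ Finset.range (n + 1) then 1 else 0 := by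
    split_ifs with hm
    · refine le_of_le_of_eq (ENNReal.tsum_le_tsum fun v => ?_)
        ((tsum_pow_weight_tuple t m).trans (by rw [ht, one_pow]))
      refine Set.indicator_apply_le' (fun hv => ?_) fun _ => zero_le
      rw [show listWeight w _ = n from hv]
    · refine (ENNReal.tsum_eq_zero.2 fun v => Set.indicator_of_notMem (fun hv => hm ?_) _).le
      have := length_le_listWeight hw (List.ofFn v)
      rw [List.length_ofFn, hv] at this
      simpa [Nat.lt_succ_iff] using this
  calc (wordsOfWeight w n).encard * t ^ n
      = ∑' l, (wordsOfWeight w n).indicator (fun _ => t ^ n) l := by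
        rw [← ENNReal.tsum_set_const, tsum_subtype _ fun _ => t ^ n]
    _ ≤ ∑' m, if m ∈ Finset.range (n + 1) then 1 else 0 := by
        rw [tsum_list]
        exact ENNReal.tsum_le_tsum sum_len
    _ = n + 1 := by
        rw [tsum_eq_sum fun _ hm => if_neg hm, Finset.sum_ite_mem]
        simp

lemma tsum_encard_wordsOfWeight_mul_pow {t : ℝ≥0∞} (ht : ∑' a, t ^ w a = 1) :
    ∑' n, (wordsOfWeight w n).encard * t ^ n = ∞ := by
  rw [← tsum_pow_listWeight_eq_top ht, ← ENNReal.tsum_fiberwise _ (listWeight w)]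
  refine tsum_congr fun n => ?_
  rw [← ENNReal.tsum_set_const]
  exact tsum_congr fun l => by rw [show listWeight w l = n from l.2]

variable {ζ : ℝ}

lemma tsum_ofReal_pow_weight (hζ : 0 < ζ) (hsum : HasSum (fun a => ζ⁻¹ ^ w a) 1) :
    ∑' a, ENNReal.ofReal ζ⁻¹ ^ w a = 1 := by
  have hpow (a : α) : ENNReal.ofReal ζ⁻¹ ^ w a = ENNReal.ofReal (ζ⁻¹ ^ w a) :=
    (ENNReal.ofReal_pow (by positivity) _).symm
  rw [tsum_congr hpow, ← ENNReal.ofReal_tsum_of_nonneg (fun a => by positivity) hsum.summable,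
    hsum.tsum_eq, ENNReal.ofReal_one]

lemma wordsOfWeight_finite (hw : ∀ a, 0 < w a) (hζ : 0 < ζ)
    (hsum : HasSum (fun a => ζ⁻¹ ^ w a) 1) (n : ℕ) : (wordsOfWeight w n).Finite := by
  by_contra hinf
  have hle := encard_wordsOfWeight_mul_pow_le hw (tsum_ofReal_pow_weight hζ hsum) n
  rw [Set.encard_eq_top hinf, ENat.toENNReal_top,
    ENNReal.top_mul (pow_ne_zero n (by simpa using hζ))] at hle
  exact ENNReal.add_ne_top.2 ⟨ENNReal.natCast_ne_top n, ENNReal.one_ne_top⟩ (top_le_iff.1 hle)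

lemma encard_wordsOfWeight_mul_pow (hw : ∀ a, 0 < w a) (hζ : 0 < ζ)
    (hsum : HasSum (fun a => ζ⁻¹ ^ w a) 1) (n : ℕ) :
    (wordsOfWeight w n).encard * ENNReal.ofReal ζ⁻¹ ^ n =
      ENNReal.ofReal (wordCount w n * ζ⁻¹ ^ n) := by
  rw [ENNReal.ofReal_mul (by positivity), ENNReal.ofReal_natCast,
    ENNReal.ofReal_pow (by positivity), wordCount,
    ← (wordsOfWeight_finite hw hζ hsum n).cast_ncard_eq, ENat.toENNReal_coe]

lemma wordCount_le (hw : ∀ a, 0 < w a) (hζ : 0 < ζ) (hsum : HasSum (fun a => ζ⁻¹ ^ w a) 1)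
    (n : ℕ) : wordCount w n ≤ (n + 1) * ζ ^ n := by
  have hle := encard_wordsOfWeight_mul_pow_le hw (tsum_ofReal_pow_weight hζ hsum) n
  rw [encard_wordsOfWeight_mul_pow hw hζ hsum, ← ENNReal.ofReal_natCast, ← ENNReal.ofReal_one,
    ← ENNReal.ofReal_add (by positivity) (by positivity),
    ENNReal.ofReal_le_ofReal_iff (by positivity), inv_pow] at hle
  rwa [← div_eq_mul_inv, div_le_iff₀ (by positivity)] at hle

lemma not_summable_wordCount_mul_pow (hw : ∀ a, 0 < w a) (hζ : 0 < ζ)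
    (hsum : HasSum (fun a => ζ⁻¹ ^ w a) 1) :
    ¬ Summable fun n => wordCount w n * ζ⁻¹ ^ n := by
  intro hs
  have htop := tsum_encard_wordsOfWeight_mul_pow (tsum_ofReal_pow_weight hζ hsum)
  simp_rw [encard_wordsOfWeight_mul_pow hw hζ hsum] at htop
  rw [← ENNReal.ofReal_tsum_of_nonneg (fun n => by positivity) hs] at htop
  exact ENNReal.ofReal_ne_top htop

lemma wordCount_pos {a₀ : α} (ha₀ : w a₀ = 1) (hfin : ∀ n, (wordsOfWeight w n).Finite) (n : ℕ) :
    0 < wordCount w n :=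
  (Set.ncard_pos (hfin n)).2 ⟨List.replicate n a₀, by
    change listWeight w _ = n
    rw [listWeight_replicate, ha₀, mul_one]⟩

lemma wordCount_mul_le (hw : ∀ a, 0 < w a) (hfin : ∀ n, (wordsOfWeight w n).Finite) (m n : ℕ) :
    wordCount w m * wordCount w n ≤ wordCount w (m + n) := by
  rw [wordCount, wordCount, ← Set.ncard_prod]
  refine Set.ncard_le_ncard_of_injOn (fun l => l.1 ++ l.2) ?_ ?_ (hfin _)
  · rintro ⟨l₁, l₂⟩ ⟨rfl, rfl⟩
    exact listWeight_append _ _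
  · rintro ⟨l₁, l₂⟩ h ⟨l₁', l₂'⟩ h' happ
    exact Prod.ext_iff.2 (append_injOn_weight hw happ (h.1.trans h'.1.symm))

lemma subadditive_neg_log_wordCount (hw : ∀ a, 0 < w a) {a₀ : α} (ha₀ : w a₀ = 1)
    (hfin : ∀ n, (wordsOfWeight w n).Finite) :
    Subadditive fun n => -Real.log (wordCount w n) := by
  intro m n
  have pos (k : ℕ) : (0 : ℝ) < wordCount w k := mod_cast wordCount_pos ha₀ hfin k
  have hmul : (wordCount w m * wordCount w n : ℝ) ≤ wordCount w (m + n) :=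
    mod_cast wordCount_mul_le hw hfin m n
  have hlog := Real.log_le_log (mul_pos (pos m) (pos n)) hmul
  rw [Real.log_mul (pos m).ne' (pos n).ne'] at hlog
  change -Real.log _ ≤ -Real.log _ + -Real.log _
  linarith

lemma log_wordCount_div_le (hw : ∀ a, 0 < w a) {a₀ : α} (ha₀ : w a₀ = 1) (hζ : 0 < ζ)
    (hsum : HasSum (fun a => ζ⁻¹ ^ w a) 1) {n : ℕ} (hn : n ≠ 0) :
    Real.log (wordCount w n) / n ≤ Real.log (n + 1) / n + Real.log ζ := by
  have hpos := wordCount_pos ha₀ (wordsOfWeight_finite hw hζ hsum) n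
  have hlog := Real.log_le_log (mod_cast hpos) (wordCount_le hw hζ hsum n)
  rw [Real.log_mul (by positivity) (by positivity), Real.log_pow] at hlog
  rwa [div_add' _ _ _ (by positivity), div_le_div_iff_of_pos_right (by positivity),
    mul_comm _ (n : ℝ)]

lemma tendsto_log_succ_div_atTop :
    Tendsto (fun n : ℕ => Real.log (n + 1) / n) atTop (𝓝 0) := by
  have hpow := Real.tendsto_pow_log_div_mul_add_atTop 1 (-1) 1 one_ne_zero
  have hcast : Tendsto (fun n : ℕ => (n : ℝ) + 1) atTop atTop :=
    tendsto_natCast_atTop_atTop.atTop_add tendsto_const_nhds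
  simpa [Function.comp_def] using hpow.comp hcast

/-- By Fekete's lemma the limit `L` exists and `wordCount w n ≤ exp (n L)`. If `L < log ζ`, then
`∑ wordCount w n / ζ ^ n` would be dominated by a geometric series. -/
lemma tendsto_log_wordCount_div (hw : ∀ a, 0 < w a) {a₀ : α} (ha₀ : w a₀ = 1) (hζ : 0 < ζ)
    (hsum : HasSum (fun a => ζ⁻¹ ^ w a) 1) :
    Tendsto (fun n => Real.log (wordCount w n) / n) atTop (𝓝 (Real.log ζ)) := by
  have hfin := wordsOfWeight_finite hw hζ hsum
  have hsub := subadditive_neg_log_wordCount hw ha₀ hfin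
  have hupper : Tendsto (fun n : ℕ => Real.log (n + 1) / n + Real.log ζ) atTop
      (𝓝 (Real.log ζ)) := by
    simpa using tendsto_log_succ_div_atTop.add_const (Real.log ζ)
  have hle : ∀ᶠ n : ℕ in atTop, Real.log (wordCount w n) / n ≤ Real.log (n + 1) / n + Real.log ζ :=
    (eventually_ne_atTop 0).mono fun n hn => log_wordCount_div_le hw ha₀ hζ hsum hn
  have hbdd : BddBelow (Set.range fun n : ℕ => -Real.log (wordCount w n) / n) := by
    refine (hupper.neg.isBoundedUnder_ge.mono_ge ?_).bddBelow_range
    filter_upwards [hle] with n hn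
    rw [neg_div]
    exact neg_le_neg hn
  set L := -hsub.lim
  have hlim : Tendsto (fun n => Real.log (wordCount w n) / n) atTop (𝓝 L) := by
    simpa [neg_div] using (hsub.tendsto_lim hbdd).neg
  have hcount (n : ℕ) : (wordCount w n : ℝ) ≤ Real.exp L ^ n := by
    rcases eq_or_ne n 0 with rfl | hn
    · simpa using wordCount_le hw hζ hsum 0
    have hpos : (0 : ℝ) < wordCount w n := mod_cast wordCount_pos ha₀ hfin n
    rw [← Real.exp_nat_mul, ← Real.log_le_iff_le_exp hpos]
    have := hsub.lim_le_div hbdd hn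
    rw [neg_div, le_neg, div_le_iff₀ (by positivity)] at this
    linarith
  obtain hlt | heq := (le_of_tendsto_of_tendsto hlim hupper hle).lt_or_eq
  · refine absurd ?_ (not_summable_wordCount_mul_pow hw hζ hsum)
    have hratio : Real.exp L * ζ⁻¹ < 1 := by
      rwa [← div_eq_mul_inv, div_lt_one hζ, ← Real.lt_log_iff_exp_lt hζ]
    refine (summable_geometric_of_lt_one (by positivity) hratio).of_nonneg_of_le
      (fun n => by positivity) fun n => ?_
    rw [mul_pow]
    gcongr
    exact hcount n
  · rwa [← heq]

lemma tendsto_wordCount_rpow_inv (hw : ∀ a, 0 < w a) {a₀ : α} (ha₀ : w a₀ = 1) (hζ : 0 < ζ)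
    (hsum : HasSum (fun a => ζ⁻¹ ^ w a) 1) :
    Tendsto (fun n : ℕ => (wordCount w n : ℝ) ^ (n : ℝ)⁻¹) atTop (𝓝 ζ) := by
  have hexp := (Real.continuous_exp.tendsto _).comp (tendsto_log_wordCount_div hw ha₀ hζ hsum)
  rw [Real.exp_log hζ] at hexp
  refine hexp.congr fun n => ?_
  have hpos := wordCount_pos ha₀ (wordsOfWeight_finite hw hζ hsum) n
  rw [Function.comp_apply, Real.rpow_def_of_pos (mod_cast hpos), div_eq_mul_inv]

lemma tendsto_pow_mul_pow_rpow_inv (hζ : 0 < ζ) (k : ℕ) :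
    Tendsto (fun n : ℕ => ((n + 2 : ℝ) ^ k * ζ ^ (n + 1)) ^ (n : ℝ)⁻¹) atTop (𝓝 ζ) := by
  have hinv : Tendsto (fun n : ℕ => (n : ℝ)⁻¹) atTop (𝓝 0) := tendsto_inv_atTop_nhds_zero_nat
  have hcast : Tendsto (fun n : ℕ => (n : ℝ) + 2) atTop atTop :=
    tendsto_natCast_atTop_atTop.atTop_add tendsto_const_nhds
  have hpoly := (tendsto_rpow_div_mul_add k 1 (-2) zero_ne_one).comp hcast
  have hgeom : Tendsto (fun n : ℕ => ζ ^ (1 + (n : ℝ)⁻¹)) atTop (𝓝 ζ) := by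
    simpa [Function.comp_def] using
      ((Real.continuous_const_rpow hζ.ne').tendsto _).comp (hinv.const_add 1)
  refine (by simpa using hpoly.mul hgeom : Tendsto _ _ (𝓝 ζ)).congr' ?_
  filter_upwards [eventually_ne_atTop 0] with n hn
  rw [Real.mul_rpow (by positivity) (by positivity), ← Real.rpow_natCast, ← Real.rpow_natCast,
    ← Real.rpow_mul (by positivity), ← Real.rpow_mul hζ.le]
  congr 2
  push_cast
  rw [add_mul, mul_inv_cancel₀ (by positivity), one_mul]

lemma tendsto_rpow_inv_of_wordCount_le (hw : ∀ a, 0 < w a) {a₀ : α} (ha₀ : w a₀ = 1) (hζ : 1 ≤ ζ)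
    (hsum : HasSum (fun a => ζ⁻¹ ^ w a) 1) {c : ℕ → ℕ} (hlower : ∀ n, wordCount w n ≤ c n)
    (hupper : ∀ n, c n ≤ (n + 1) * ∑ m ∈ Finset.range (n + 2), wordCount w m) :
    Tendsto (fun n : ℕ => (c n : ℝ) ^ (n : ℝ)⁻¹) atTop (𝓝 ζ) := by
  have hζ₀ : 0 < ζ := one_pos.trans_le hζ
  have hcount {n m : ℕ} (hm : m ∈ Finset.range (n + 2)) :
      (wordCount w m : ℝ) ≤ (n + 2) * ζ ^ (n + 1) := by
    have hmn : m ≤ n + 1 := Nat.lt_succ_iff.1 (Finset.mem_range.1 hm)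
    have hmn' : (m : ℝ) + 1 ≤ n + 2 := by
      have : (m : ℝ) ≤ n + 1 := mod_cast hmn
      linarith
    exact (wordCount_le hw hζ₀ hsum m).trans (by gcongr)
  have hc (n : ℕ) : (c n : ℝ) ≤ (n + 2) ^ 3 * ζ ^ (n + 1) := calc
    (c n : ℝ) ≤ (n + 1) * ∑ m ∈ Finset.range (n + 2), (wordCount w m : ℝ) := mod_cast hupper n
    _ ≤ (n + 1) * ((n + 2) * ((n + 2) * ζ ^ (n + 1))) := by
      gcongr
      simpa using Finset.sum_le_card_nsmul _ _ _ fun m => hcount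
    _ ≤ (n + 2) * ((n + 2) * ((n + 2) * ζ ^ (n + 1))) := by gcongr; norm_num
    _ = (n + 2) ^ 3 * ζ ^ (n + 1) := by ring
  refine tendsto_of_tendsto_of_tendsto_of_le_of_le (tendsto_wordCount_rpow_inv hw ha₀ hζ₀ hsum)
    (tendsto_pow_mul_pow_rpow_inv hζ₀ 3) (fun n => ?_) fun n => ?_
  · exact Real.rpow_le_rpow (by positivity) (mod_cast hlower n) (by positivity)
  · exact Real.rpow_le_rpow (by positivity) (hc n) (by positivity)

end Words

/-! ### Trees and forests -/

section Trees

variable {q : ℕ}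

/-- Finite rooted trees all of whose inner vertices (carets) have `q + 1` ordered children. -/
inductive CaretTree (q : ℕ) : Type
  | leaf : CaretTree q
  | node : (Fin (q + 1) → CaretTree q) → CaretTree q

/-- The children of a caret, continued by leaves to an infinite forest. -/
def extend (f : Fin (q + 1) → CaretTree q) (k : ℕ) : CaretTree q :=
  if h : k < q + 1 then f ⟨k, h⟩ else .leaf

lemma extend_val (f : Fin (q + 1) → CaretTree q) (k : Fin (q + 1)) : extend f k = f k := by
  simp only [extend, k.2, dite_true]

lemma extend_of_lt (f : Fin (q + 1) → CaretTree q) {k : ℕ} (hk : k < q + 1) :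
    extend f k = f ⟨k, hk⟩ := by
  simp only [extend, hk, dite_true]

/-- The number of leaves of a tree. -/
def CaretTree.leafCount : CaretTree q → ℕ
  | .leaf => 1
  | .node f => ∑ k, (f k).leafCount

/-- The number of leaves of the trees of a forest that precede the `k`-th tree. -/
def leafOffset (φ : ℕ → CaretTree q) (k : ℕ) : ℕ := ∑ i ∈ Finset.range k, (φ i).leafCount

@[simp] lemma leafOffset_zero (φ : ℕ → CaretTree q) : leafOffset φ 0 = 0 := rfl

lemma leafOffset_succ (φ : ℕ → CaretTree q) (k : ℕ) :
    leafOffset φ (k + 1) = leafOffset φ k + (φ k).leafCount :=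
  Finset.sum_range_succ _ _

lemma leafCount_node (f : Fin (q + 1) → CaretTree q) :
    (CaretTree.node f).leafCount = leafOffset (extend f) (q + 1) := by
  rw [CaretTree.leafCount, leafOffset, ← Fin.sum_univ_eq_sum_range]
  simp only [extend_val]

lemma leafOffset_modEq_of_leafCount {φ : ℕ → CaretTree q} {k : ℕ}
    (h : ∀ i < k, (φ i).leafCount ≡ 1 [MOD q]) : leafOffset φ k ≡ k [MOD q] := by
  induction k with
  | zero => rfl
  | succ k ih =>
    rw [leafOffset_succ]
    exact (ih fun i hi => h i (hi.trans k.lt_succ_self)).add (h k k.lt_succ_self)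

lemma leafCount_modEq_one (T : CaretTree q) : T.leafCount ≡ 1 [MOD q] := by
  induction T with
  | leaf => rfl
  | node f ih =>
    rw [leafCount_node]
    refine (leafOffset_modEq_of_leafCount fun i hi => ?_).trans (by simp [Nat.ModEq])
    rw [extend_of_lt f hi]
    exact ih _

lemma leafOffset_modEq (φ : ℕ → CaretTree q) (k : ℕ) : leafOffset φ k ≡ k [MOD q] :=
  leafOffset_modEq_of_leafCount fun i _ => leafCount_modEq_one (φ i)

/-- For a caret whose root stands at position `c` of a block of `q` consecutive positions: the
children that fall beyond the block are leaves. -/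
def LeavesBeyondBlock (f : Fin (q + 1) → CaretTree q) (c : ℕ) : Prop :=
  ∀ k : Fin (q + 1), q ≤ c + k → f k = .leaf

open Classical in
/-- The length contribution of a tree whose root is at position `m`: a caret costs one letter, and
two more letters are needed to enter the next block unless all the children there are leaves. -/
noncomputable def CaretTree.weight : CaretTree q → ℕ → ℕ
  | .leaf, _ => 0
  | .node f, m => 1 + (if LeavesBeyondBlock f (m % q) then 0 else 2) +
      ∑ k : Fin (q + 1), (f k).weight (m + k)

lemma CaretTree.weight_congr (T : CaretTree q) {m n : ℕ} (h : m ≡ n [MOD q]) :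
    T.weight m = T.weight n := by
  induction T generalizing m n with
  | leaf => rfl
  | node f ih =>
    simp only [weight]
    rw [h, Finset.sum_congr rfl fun k _ => ih k (h.add_right k)]

end Trees

/-! ### Elements of the group given by forests -/

section Elements

variable {q : ℕ}

/-- The generator `x_0`. It shifts the indices of all other generators. -/
def shiftGen (q : ℕ) : FP (q + 1) := xgen (q + 1) 0

/-- The generator `x_{i+1}`, which corresponds to a single caret at position `i`. -/
def caretGen (q i : ℕ) : FP (q + 1) := xgen (q + 1) (i + 1)

lemma xgen_mul_xgen {i j : ℕ} (h : i < j) :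
    xgen (q + 1) j * xgen (q + 1) i = xgen (q + 1) i * xgen (q + 1) (j + q) := by
  have hrel : PresentedGroup.mk (ThompsonRels (q + 1)) (FreeGroup.of j * FreeGroup.of i *
      (FreeGroup.of (j + (q + 1) - 1))⁻¹ * (FreeGroup.of i)⁻¹) = 1 :=
    PresentedGroup.mk_eq_one_iff.2 (Subgroup.subset_normalClosure ⟨i, j, h, rfl⟩)
  rwa [map_mul, map_mul, map_mul, map_inv, map_inv, mul_inv_eq_one, mul_inv_eq_iff_eq_mul] at hrel

lemma caretGen_mul_caretGen {i j : ℕ} (h : i < j) :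
    caretGen q j * caretGen q i = caretGen q i * caretGen q (j + q) := by
  rw [caretGen, caretGen, xgen_mul_xgen (by lia), caretGen, Nat.add_right_comm]

lemma caretGen_mul_shiftGen (j : ℕ) :
    caretGen q j * shiftGen q = shiftGen q * caretGen q (j + q) := by
  rw [caretGen, shiftGen, xgen_mul_xgen (by lia), caretGen, Nat.add_right_comm]

lemma caretGen_mul_shiftGen_pow (m a : ℕ) :
    caretGen q m * shiftGen q ^ a = shiftGen q ^ a * caretGen q (m + a * q) := by
  induction a with
  | zero => simp
  | succ a ih =>
    rw [pow_succ, ← mul_assoc, ih, mul_assoc, caretGen_mul_shiftGen, mul_assoc, add_assoc,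
      Nat.succ_mul]

/-- The product `F (n - 1) * ⋯ * F 1 * F 0` in descending order. -/
def descProd {M : Type*} [Monoid M] (F : ℕ → M) : ℕ → M
  | 0 => 1
  | n + 1 => F n * descProd F n

section DescProd

variable {M : Type*} [Monoid M]

lemma descProd_congr {F F' : ℕ → M} {n : ℕ} (h : ∀ i < n, F i = F' i) :
    descProd F n = descProd F' n := by
  induction n with
  | zero => rfl
  | succ n ih => rw [descProd, descProd, ih fun i hi => h i (by lia), h n n.lt_succ_self]

lemma descProd_add (F : ℕ → M) (a b : ℕ) :
    descProd F (a + b) = descProd (fun i => F (a + i)) b * descProd F a := by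
  induction b with
  | zero => simp [descProd]
  | succ b ih => rw [← add_assoc, descProd, descProd, ih, mul_assoc]

lemma descProd_eq_one {F : ℕ → M} {n : ℕ} (h : ∀ i < n, F i = 1) : descProd F n = 1 := by
  induction n with
  | zero => rfl
  | succ n ih => rw [descProd, ih fun i hi => h i (by lia), h n n.lt_succ_self, one_mul]

lemma descProd_semiconj {F F' : ℕ → M} {x : M} {n : ℕ} (h : ∀ i < n, SemiconjBy x (F i) (F' i)) :
    SemiconjBy x (descProd F n) (descProd F' n) := by
  induction n with
  | zero => exact .one_right x
  | succ n ih => exact (h n n.lt_succ_self).mul_right (ih fun i hi => h i (by lia))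

lemma descProd_mem {S : Submonoid M} {F : ℕ → M} {n : ℕ} (h : ∀ i < n, F i ∈ S) :
    descProd F n ∈ S := by
  induction n with
  | zero => exact S.one_mem
  | succ n ih => exact S.mul_mem (h n n.lt_succ_self) (ih fun i hi => h i (by lia))

end DescProd

/-- The positive element given by a tree with root at position `m`: the generator of its root
caret, followed by the elements of its subtrees from right to left. -/
def treeElem : CaretTree q → ℕ → FP (q + 1)
  | .leaf, _ => 1
  | .node f, m => caretGen q m *
      descProd (fun k => if h : k < q + 1 then treeElem (f ⟨k, h⟩) (m + k) else 1) (q + 1)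

/-- The positive element given by the first `R` trees of a forest with roots at
`m, m + 1, …`. -/
def forestElem (m : ℕ) (φ : ℕ → CaretTree q) (R : ℕ) : FP (q + 1) :=
  descProd (fun k => treeElem (φ k) (m + k)) R

lemma treeElem_node (f : Fin (q + 1) → CaretTree q) (m : ℕ) :
    treeElem (.node f) m = caretGen q m * forestElem m (extend f) (q + 1) := by
  rw [treeElem, forestElem]
  congr 1
  exact descProd_congr fun i hi => by simp only [hi, dite_true, extend]

lemma forestElem_succ (m : ℕ) (φ : ℕ → CaretTree q) (R : ℕ) :
    forestElem m φ (R + 1) = treeElem (φ R) (m + R) * forestElem m φ R := rfl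

lemma forestElem_add (m : ℕ) (φ : ℕ → CaretTree q) (a b : ℕ) :
    forestElem m φ (a + b) =
      forestElem (m + a) (fun i => φ (a + i)) b * forestElem m φ a := by
  simp only [forestElem, descProd_add, add_assoc]

lemma forestElem_congr (m : ℕ) {φ ψ : ℕ → CaretTree q} {R : ℕ} (h : ∀ i < R, φ i = ψ i) :
    forestElem m φ R = forestElem m ψ R :=
  descProd_congr fun i hi => by rw [h i hi]

lemma forestElem_eq_one (m : ℕ) {φ : ℕ → CaretTree q} {R : ℕ} (h : ∀ i < R, φ i = .leaf) :
    forestElem m φ R = 1 :=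
  descProd_eq_one fun i hi => by rw [h i hi, treeElem]

lemma semiconjBy_treeElem {x : FP (q + 1)} {m₀ : ℕ}
    (hx : ∀ m, m₀ ≤ m → SemiconjBy x (caretGen q (m + q)) (caretGen q m))
    (T : CaretTree q) {m : ℕ} (hm : m₀ ≤ m) :
    SemiconjBy x (treeElem T (m + q)) (treeElem T m) := by
  induction T generalizing m with
  | leaf => exact .one_right x
  | node f ih =>
    rw [treeElem_node, treeElem_node]
    refine (hx m hm).mul_right (descProd_semiconj fun k hk => ?_)
    rw [extend_of_lt f hk, Nat.add_right_comm]
    exact ih _ (by lia)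

lemma semiconjBy_shiftGen_treeElem (T : CaretTree q) (m : ℕ) :
    SemiconjBy (shiftGen q) (treeElem T (m + q)) (treeElem T m) :=
  semiconjBy_treeElem (fun m _ => (caretGen_mul_shiftGen m).symm) T m.zero_le

lemma semiconjBy_caretGen_treeElem (T : CaretTree q) {i m : ℕ} (h : i < m) :
    SemiconjBy (caretGen q i) (treeElem T (m + q)) (treeElem T m) :=
  semiconjBy_treeElem (fun _ hm => (caretGen_mul_caretGen hm).symm) T (Nat.succ_le_of_lt h)

lemma semiconjBy_shiftGen_forestElem (m : ℕ) (φ : ℕ → CaretTree q) (R : ℕ) :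
    SemiconjBy (shiftGen q) (forestElem (m + q) φ R) (forestElem m φ R) :=
  descProd_semiconj fun k _ => by
    rw [Nat.add_right_comm]
    exact semiconjBy_shiftGen_treeElem _ _

/-- The forest obtained by joining the `q + 1` trees from position `m` on under a new caret. -/
def graft (φ : ℕ → CaretTree q) (m : ℕ) : ℕ → CaretTree q := fun i =>
  if i < m then φ i else if i = m then .node (fun k => φ (m + k)) else φ (i + q)

lemma graft_of_lt (φ : ℕ → CaretTree q) {i m : ℕ} (h : i < m) : graft φ m i = φ i := if_pos h

lemma graft_self (φ : ℕ → CaretTree q) (m : ℕ) : graft φ m m = .node (fun k => φ (m + k)) := by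
  simp [graft]

lemma graft_of_gt (φ : ℕ → CaretTree q) {i m : ℕ} (h : m < i) : graft φ m i = φ (i + q) := by
  simp [graft, h.not_gt, h.ne']

lemma caretGen_mul_forestElem (φ : ℕ → CaretTree q) (m r : ℕ) :
    caretGen q m * forestElem 0 φ (m + (q + 1) + r) = forestElem 0 (graft φ m) (m + 1 + r) := by
  have right : SemiconjBy (caretGen q m) (forestElem (m + (q + 1)) (fun i => φ (m + (q + 1) + i)) r)
      (forestElem (m + 1) (fun i => graft φ m (m + 1 + i)) r) :=
    descProd_semiconj fun k _ => by
      beta_reduce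
      rw [graft_of_gt φ (by lia), show m + (q + 1) + k = m + 1 + k + q by ring]
      exact semiconjBy_caretGen_treeElem _ (by lia)
  have middle : caretGen q m * forestElem m (fun i => φ (m + i)) (q + 1) =
      treeElem (graft φ m m) m := by
    rw [graft_self, treeElem_node]
    congr 1
    exact forestElem_congr _ fun i hi => by rw [extend_of_lt _ hi]
  have left : forestElem 0 φ m = forestElem 0 (graft φ m) m :=
    forestElem_congr _ fun i hi => (graft_of_lt φ hi).symm
  rw [forestElem_add, forestElem_add 0 (graft φ m), zero_add, zero_add, ← mul_assoc, right.eq,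
    mul_assoc, forestElem_add 0 φ m (q + 1), zero_add, ← mul_assoc (caretGen q m), middle, left,
    forestElem_succ, zero_add]

lemma shiftGen_mem_Fplus : shiftGen q ∈ Fplus (q + 1) := Submonoid.subset_closure ⟨_, rfl⟩

lemma caretGen_mem_Fplus (i : ℕ) : caretGen q i ∈ Fplus (q + 1) :=
  Submonoid.subset_closure ⟨_, rfl⟩

lemma treeElem_mem_Fplus (T : CaretTree q) (m : ℕ) : treeElem T m ∈ Fplus (q + 1) := by
  induction T generalizing m with
  | leaf => exact Submonoid.one_mem _
  | node f ih =>
    rw [treeElem_node]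
    refine Submonoid.mul_mem _ (caretGen_mem_Fplus m) (descProd_mem fun i hi => ?_)
    rw [extend_of_lt f hi]
    exact ih _ _

lemma forestElem_mem_Fplus (m : ℕ) (φ : ℕ → CaretTree q) (R : ℕ) :
    forestElem m φ R ∈ Fplus (q + 1) :=
  descProd_mem fun _ _ => treeElem_mem_Fplus _ _

lemma forestElem_eq_of_le (m : ℕ) {φ : ℕ → CaretTree q} {R R' : ℕ} (h : R ≤ R')
    (hleaf : ∀ i, R ≤ i → φ i = .leaf) : forestElem m φ R' = forestElem m φ R := by
  obtain ⟨d, rfl⟩ := Nat.exists_eq_add_of_le h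
  rw [forestElem_add, forestElem_eq_one _ fun i _ => hleaf _ (Nat.le_add_right R i), one_mul]

lemma exists_eq_shiftGen_pow_mul_forestElem {g : FP (q + 1)} (hg : g ∈ Fplus (q + 1)) :
    ∃ (a : ℕ) (φ : ℕ → CaretTree q) (R : ℕ), (∀ i, R ≤ i → φ i = .leaf) ∧
      g = shiftGen q ^ a * forestElem 0 φ R := by
  induction hg using Submonoid.closure_induction_left with
  | one => exact ⟨0, fun _ => .leaf, 0, fun _ _ => rfl, by simp [forestElem, descProd]⟩
  | mul_left x hx y hy ih =>
    obtain ⟨i, rfl⟩ := hx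
    obtain ⟨a, φ, R, hleaf, rfl⟩ := ih
    cases i with
    | zero => exact ⟨a + 1, φ, R, hleaf, by rw [pow_succ', mul_assoc, shiftGen]⟩
    | succ m =>
      refine ⟨a, graft φ (m + a * q), m + a * q + 1 + R, fun i hi => ?_, ?_⟩
      · rw [graft_of_gt φ (by lia), hleaf _ (by lia)]
      · rw [← caretGen_mul_forestElem,
          forestElem_eq_of_le 0 (show R ≤ m + a * q + (q + 1) + R by lia) hleaf,
          ← mul_assoc, ← mul_assoc, ← caretGen_mul_shiftGen_pow, caretGen]

end Elements

/-! ### Word length and blocks -/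

section Length

variable {q : ℕ}

/-- The letters `x_i` (as `(i, true)`) and `x_i⁻¹` (as `(i, false)`) that define the word length. -/
abbrev Letter (q : ℕ) := Fin (q + 1) × Bool

/-- The group element denoted by a letter. -/
def letterElem (a : Letter q) : FP (q + 1) :=
  if a.2 then xgen (q + 1) a.1 else (xgen (q + 1) a.1)⁻¹

/-- The group element represented by a word in the letters. -/
def wordElem (l : List (Letter q)) : FP (q + 1) := (l.map letterElem).prod

lemma wordElem_cons (a : Letter q) (l : List (Letter q)) :
    wordElem (a :: l) = letterElem a * wordElem l := List.prod_cons

lemma wordElem_append (l l' : List (Letter q)) :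
    wordElem (l ++ l') = wordElem l * wordElem l' := by
  simp [wordElem]

lemma mem_range_letterElem {g : FP (q + 1)} :
    g ∈ Set.range letterElem ↔ ∃ i < q + 1, g = xgen (q + 1) i ∨ g = (xgen (q + 1) i)⁻¹ := by
  constructor
  · rintro ⟨⟨i, b⟩, rfl⟩
    cases b
    exacts [⟨i, i.2, .inr rfl⟩, ⟨i, i.2, .inl rfl⟩]
  · rintro ⟨i, hi, rfl | rfl⟩
    exacts [⟨(⟨i, hi⟩, true), rfl⟩, ⟨(⟨i, hi⟩, false), rfl⟩]

lemma wlen_eq_sInf_wordElem (g : FP (q + 1)) :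
    wlen (q + 1) g = sInf {n | ∃ l : List (Letter q), l.length = n ∧ wordElem l = g} := by
  rw [wlen]
  congr 1
  ext n
  constructor
  · rintro ⟨l, hn, hl, hg⟩
    obtain ⟨l, rfl⟩ : l ∈ Set.range (List.map letterElem) := by
      rw [Set.range_list_map]
      exact fun a ha => mem_range_letterElem.2 (hl a ha)
    exact ⟨l, by rwa [List.length_map] at hn, hg⟩
  · rintro ⟨l, hn, hg⟩
    refine ⟨l.map letterElem, by rwa [List.length_map], fun a ha => mem_range_letterElem.1 ?_, hg⟩
    obtain ⟨b, -, rfl⟩ := List.mem_map.1 ha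
    exact ⟨b, rfl⟩

lemma wlen_wordElem_le (l : List (Letter q)) : wlen (q + 1) (wordElem l) ≤ l.length := by
  rw [wlen_eq_sInf_wordElem]
  exact Nat.sInf_le ⟨l, rfl, rfl⟩

lemma exists_wordElem_eq_xgen (hq : 0 < q) (i : ℕ) :
    ∃ l : List (Letter q), wordElem l = xgen (q + 1) i := by
  induction i using Nat.strong_induction_on with
  | _ i ih =>
    by_cases h : i < q + 1
    · exact ⟨[(⟨i, h⟩, true)], by simp [wordElem, letterElem]⟩
    · obtain ⟨l, hl⟩ := ih (i - q) (by lia)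
      refine ⟨(0, false) :: (l ++ [(0, true)]), ?_⟩
      rw [wordElem_cons, wordElem_append, hl, letterElem, wordElem]
      have := xgen_mul_xgen (q := q) (i := 0) (j := i - q) (by lia)
      rw [Nat.sub_add_cancel (by lia)] at this
      simp [letterElem, this]

lemma wordElem_surjective (hq : 0 < q) : Function.Surjective (wordElem (q := q)) := by
  intro g
  have hg : g ∈ Subgroup.closure (Set.range (xgen (q + 1))) := by
    rw [show xgen (q + 1) = PresentedGroup.of from rfl, PresentedGroup.closure_range_of]
    exact Subgroup.mem_top g
  induction hg using Subgroup.closure_induction with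
  | mem x hx =>
    obtain ⟨i, rfl⟩ := hx
    exact exists_wordElem_eq_xgen hq i
  | one => exact ⟨[], rfl⟩
  | mul x y _ _ hx hy =>
    obtain ⟨l, rfl⟩ := hx
    obtain ⟨l', rfl⟩ := hy
    exact ⟨l ++ l', wordElem_append l l'⟩
  | inv x _ hx =>
    obtain ⟨l, rfl⟩ := hx
    refine ⟨(l.map fun a => (a.1, !a.2)).reverse, ?_⟩
    rw [wordElem, wordElem, List.prod_inv_reverse, List.map_reverse, List.map_map, List.map_map]
    congr 3
    funext ⟨i, b⟩
    cases b <;> simp [letterElem]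

lemma exists_wordElem_eq_of_wlen (hq : 0 < q) (g : FP (q + 1)) :
    ∃ l : List (Letter q), l.length = wlen (q + 1) g ∧ wordElem l = g := by
  obtain ⟨l, hl⟩ := wordElem_surjective hq g
  rw [wlen_eq_sInf_wordElem]
  exact Nat.sInf_mem (s := {n | ∃ l : List (Letter q), l.length = n ∧ wordElem l = g})
    ⟨l.length, l, rfl, hl⟩

lemma wlen_one : wlen (q + 1) 1 = 0 :=
  Nat.le_zero.1 (wlen_wordElem_le (q := q) [])

lemma wlen_mul_le (hq : 0 < q) (g h : FP (q + 1)) :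
    wlen (q + 1) (g * h) ≤ wlen (q + 1) g + wlen (q + 1) h := by
  obtain ⟨l, hl, hlg⟩ := exists_wordElem_eq_of_wlen hq g
  obtain ⟨l', hl', hlh⟩ := exists_wordElem_eq_of_wlen hq h
  rw [← hl, ← hl', ← List.length_append, ← hlg, ← hlh, ← wordElem_append]
  exact wlen_wordElem_le _

lemma wlen_letterElem_le (a : Letter q) : wlen (q + 1) (letterElem a) ≤ 1 := by
  simpa [wordElem] using wlen_wordElem_le [a]

lemma wlen_shiftGen_le : wlen (q + 1) (shiftGen q) ≤ 1 := wlen_letterElem_le (0, true)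

lemma wlen_shiftGen_inv_le : wlen (q + 1) (shiftGen q)⁻¹ ≤ 1 := wlen_letterElem_le (0, false)

lemma wlen_caretGen_le {m : ℕ} (h : m < q) : wlen (q + 1) (caretGen q m) ≤ 1 :=
  wlen_letterElem_le (⟨m + 1, Nat.succ_lt_succ h⟩, true)

lemma finite_setOf_wlen_le (hq : 0 < q) (n : ℕ) :
    {g : FP (q + 1) | wlen (q + 1) g ≤ n}.Finite := by
  refine ((List.finite_length_le (Letter q) n).image wordElem).subset fun g hg => ?_
  obtain ⟨l, hl, hlg⟩ := exists_wordElem_eq_of_wlen hq g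
  exact ⟨l, hl.trans_le hg, hlg⟩

lemma wlen_forestElem_le (hq : 0 < q) {m : ℕ} {φ : ℕ → CaretTree q} {R : ℕ}
    (h : ∀ k < R, wlen (q + 1) (treeElem (φ k) (m + k)) ≤ (φ k).weight (m + k)) :
    wlen (q + 1) (forestElem m φ R) ≤ ∑ k ∈ Finset.range R, (φ k).weight (m + k) := by
  induction R with
  | zero => exact wlen_one.le
  | succ R ih =>
    have hmul := wlen_mul_le hq (treeElem (φ R) (m + R)) (forestElem m φ R)
    have hlast := h R R.lt_succ_self
    have hinit := ih fun k hk => h k (by lia)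
    rw [forestElem_succ, Finset.sum_range_succ]
    lia

lemma wlen_forestElem_next_block_le (hq : 0 < q) (φ : ℕ → CaretTree q) (R : ℕ) :
    wlen (q + 1) (forestElem q φ R) ≤ 2 + wlen (q + 1) (forestElem 0 φ R) := by
  have hconj : forestElem q φ R = (shiftGen q)⁻¹ * (forestElem 0 φ R * shiftGen q) := by
    have := (semiconjBy_shiftGen_forestElem 0 φ R).eq
    rw [zero_add] at this
    rw [← this, inv_mul_cancel_left]
  have h₁ := wlen_mul_le hq (shiftGen q)⁻¹ (forestElem 0 φ R * shiftGen q)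
  have h₂ := wlen_mul_le hq (forestElem 0 φ R) (shiftGen q)
  have h₃ := wlen_shiftGen_le (q := q)
  have h₄ := wlen_shiftGen_inv_le (q := q)
  rw [hconj]
  lia

lemma forestElem_extend_eq_mul (f : Fin (q + 1) → CaretTree q) {m : ℕ} (hm : m ≤ q) :
    forestElem m (extend f) (q + 1) =
      forestElem q (fun i => extend f (q - m + i)) (m + 1) * forestElem m (extend f) (q - m) := by
  have := forestElem_add m (extend f) (q - m) (m + 1)
  rwa [show q - m + (m + 1) = q + 1 by lia, Nat.add_sub_cancel' hm] at this

lemma sum_weight_children (f : Fin (q + 1) → CaretTree q) {m : ℕ} (hm : m ≤ q) :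
    ∑ k : Fin (q + 1), (f k).weight (m + k) =
      ∑ i ∈ Finset.range (m + 1), (extend f (q - m + i)).weight (0 + i) +
        ∑ k ∈ Finset.range (q - m), (extend f k).weight (m + k) := by
  have hext (k : Fin (q + 1)) : (f k).weight (m + k) = (extend f k).weight (m + k) := by
    rw [extend_val]
  rw [Finset.sum_congr rfl fun k _ => hext k,
    Fin.sum_univ_eq_sum_range fun k => (extend f k).weight (m + k),
    show q + 1 = q - m + (m + 1) by lia, Finset.sum_range_add, add_comm]
  congr 1
  refine Finset.sum_congr rfl fun i _ => CaretTree.weight_congr _ ?_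
  rw [show m + (q - m + i) = 0 + i + q by lia]
  exact Nat.add_mod_right _ _

lemma LeavesBeyondBlock.extend_eq_leaf {f : Fin (q + 1) → CaretTree q} {m : ℕ}
    (h : LeavesBeyondBlock f m) {k : ℕ} (hk : q ≤ m + k) : extend f k = .leaf := by
  by_cases hkq : k < q + 1
  · rw [extend_of_lt f hkq]
    exact h ⟨k, hkq⟩ hk
  · simp [extend, hkq]

/-- The children of the root that lie in the next block are reached by conjugating with `x_0`. -/
lemma wlen_treeElem_le (hq : 0 < q) (T : CaretTree q) {m : ℕ} (hm : m < q) :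
    wlen (q + 1) (treeElem T m) ≤ T.weight m := by
  induction T generalizing m with
  | leaf => exact wlen_one.le
  | node f ih =>
    have hext (k : ℕ) {m : ℕ} (hm : m < q) :
        wlen (q + 1) (treeElem (extend f k) m) ≤ (extend f k).weight m := by
      by_cases hk : k < q + 1
      · rw [extend_of_lt f hk]
        exact ih _ hm
      · rw [extend, dif_neg hk]
        exact wlen_one.le
    set left := forestElem m (extend f) (q - m)
    set right := fun i => extend f (q - m + i)
    have hroot := wlen_caretGen_le hm
    have hleft : wlen (q + 1) left ≤ _ := wlen_forestElem_le hq fun k hk => hext _ (by lia)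
    have hright : wlen (q + 1) (forestElem 0 right (m + 1)) ≤ _ :=
      wlen_forestElem_le hq fun k hk => hext _ (by lia)
    have hmul := wlen_mul_le hq (caretGen q m) (forestElem q right (m + 1) * left)
    have hmul' := wlen_mul_le hq (forestElem q right (m + 1)) left
    rw [treeElem_node, CaretTree.weight, sum_weight_children f hm.le,
      forestElem_extend_eq_mul f hm.le, Nat.mod_eq_of_lt hm]
    split_ifs with hblock
    · have hone : forestElem q right (m + 1) = 1 :=
        forestElem_eq_one q fun i _ => hblock.extend_eq_leaf (by lia)
      rw [hone, wlen_one] at hmul'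
      rw [hone] at hmul ⊢
      lia
    · have hblock := wlen_forestElem_next_block_le hq right (m + 1)
      lia

/-- The `q` trees with roots at the positions of one block. -/
abbrev Block (q : ℕ) := Fin q → CaretTree q

/-- The length contribution of a block: its trees, and one letter `x_0`. -/
noncomputable def blockWeight (β : Block q) : ℕ := 1 + ∑ c, (β c).weight c

lemma blockWeight_pos (β : Block q) : 0 < blockWeight β := by
  rw [blockWeight]
  lia

/-- The concatenation of a list of blocks, continued by leaves. -/
def blockForest : List (Block q) → ℕ → CaretTree q
  | [], _ => .leaf
  | β :: bs, i => if h : i < q then β ⟨i, h⟩ else blockForest bs (i - q)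

lemma blockForest_cons_of_lt (β : Block q) (bs : List (Block q)) {i : ℕ} (h : i < q) :
    blockForest (β :: bs) i = β ⟨i, h⟩ := by
  simp [blockForest, h]

lemma blockForest_cons_add (β : Block q) (bs : List (Block q)) (i : ℕ) :
    blockForest (β :: bs) (q + i) = blockForest bs i := by
  simp [blockForest]

/-- The positive element `x_0 ^ a` times the element of the forest of a list of blocks. -/
def normalElem (a : ℕ) (bs : List (Block q)) : FP (q + 1) :=
  shiftGen q ^ a * forestElem 0 (blockForest bs) (bs.length * q)

/-- The normal form element whose power of `x_0` is the number of blocks; these elements are short,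
as one passes through the blocks while writing the power. -/
def blockElem (bs : List (Block q)) : FP (q + 1) := normalElem bs.length bs

lemma normalElem_mem_Fplus (a : ℕ) (bs : List (Block q)) : normalElem a bs ∈ Fplus (q + 1) :=
  Submonoid.mul_mem _ (Submonoid.pow_mem _ shiftGen_mem_Fplus _) (forestElem_mem_Fplus _ _ _)

lemma blockElem_cons (β : Block q) (bs : List (Block q)) :
    blockElem (β :: bs) =
      blockElem bs * (shiftGen q * forestElem 0 (blockForest (β :: bs)) q) := by
  have hshift : shiftGen q * forestElem q (blockForest bs) (bs.length * q) =
      forestElem 0 (blockForest bs) (bs.length * q) * shiftGen q := by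
    simpa only [zero_add] using (semiconjBy_shiftGen_forestElem 0 (blockForest bs) _).eq
  have hsplit : forestElem 0 (blockForest (β :: bs)) ((bs.length + 1) * q) =
      forestElem q (blockForest bs) (bs.length * q) * forestElem 0 (blockForest (β :: bs)) q := by
    rw [Nat.succ_mul, add_comm (bs.length * q), forestElem_add, zero_add,
      forestElem_congr _ fun i _ => blockForest_cons_add β bs i]
  rw [blockElem, blockElem, normalElem, normalElem, List.length_cons, hsplit, pow_succ]
  simp only [mul_assoc]
  rw [← mul_assoc (shiftGen q) (forestElem q _ _), hshift, mul_assoc]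

lemma wlen_blockElem_le (hq : 0 < q) (bs : List (Block q)) :
    wlen (q + 1) (blockElem bs) ≤ listWeight blockWeight bs := by
  induction bs with
  | nil => simp [blockElem, normalElem, forestElem, descProd, wlen_one]
  | cons β bs ih =>
    have hblock : wlen (q + 1) (forestElem 0 (blockForest (β :: bs)) q) ≤ ∑ c, (β c).weight c := by
      refine (wlen_forestElem_le hq fun k hk => ?_).trans_eq ?_
      · exact wlen_treeElem_le hq _ (by lia)
      · rw [← Fin.sum_univ_eq_sum_range fun k => (blockForest (β :: bs) k).weight (0 + k)]
        refine Finset.sum_congr rfl fun c _ => ?_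
        rw [blockForest_cons_of_lt β bs c.2, zero_add]
    have h₁ := wlen_mul_le hq (blockElem bs) (shiftGen q * forestElem 0 (blockForest (β :: bs)) q)
    have h₂ := wlen_mul_le hq (shiftGen q) (forestElem 0 (blockForest (β :: bs)) q)
    have h₃ := wlen_shiftGen_le (q := q)
    rw [blockElem_cons, listWeight_cons, blockWeight]
    lia

end Length

/-! ### The action on addresses -/

section Action

variable {q : ℕ}

/-- A root position `pos` together with an infinite path downwards in the full `(q + 1)`-ary tree
planted at each integer. -/
@[ext] structure Address (q : ℕ) where
  pos : ℤ
  path : Stream' (Fin (q + 1))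

/-- Joins the trees at the positions `i, …, i + q` under a caret at position `i`. -/
def contract (i : ℤ) (y : Address q) : Address q :=
  if y.pos < i then y
  else if y.pos ≤ i + q then ⟨i, Stream'.cons (Fin.ofNat (q + 1) (y.pos - i).toNat) y.path⟩
  else ⟨y.pos - q, y.path⟩

/-- Removes the caret at position `i`; the inverse of `contract i`. -/
def expand (i : ℤ) (y : Address q) : Address q :=
  if y.pos < i then y
  else if y.pos = i then ⟨i + y.path.head, y.path.tail⟩
  else ⟨y.pos + q, y.path⟩

lemma contract_of_lt {i j : ℤ} (s : Stream' (Fin (q + 1))) (h : j < i) :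
    contract i ⟨j, s⟩ = ⟨j, s⟩ := if_pos h

lemma contract_add_digit (i : ℤ) (d : Fin (q + 1)) (s : Stream' (Fin (q + 1))) :
    contract i ⟨i + d, s⟩ = ⟨i, Stream'.cons d s⟩ := by
  have hd : (d : ℤ) ≤ q := mod_cast d.is_le
  rw [contract, if_neg (by lia), if_pos (by lia)]
  simp

lemma contract_of_gt {i j : ℤ} (s : Stream' (Fin (q + 1))) (h : i + q < j) :
    contract i ⟨j, s⟩ = ⟨j - q, s⟩ := by
  rw [contract, if_neg (by dsimp only; lia), if_neg (by dsimp only; lia)]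

lemma expand_of_lt {i j : ℤ} (s : Stream' (Fin (q + 1))) (h : j < i) :
    expand i ⟨j, s⟩ = ⟨j, s⟩ := if_pos h

lemma expand_cons (i : ℤ) (d : Fin (q + 1)) (s : Stream' (Fin (q + 1))) :
    expand i ⟨i, Stream'.cons d s⟩ = ⟨i + d, s⟩ := by
  simp [expand]

lemma expand_of_gt {i j : ℤ} (s : Stream' (Fin (q + 1))) (h : i < j) :
    expand i ⟨j, s⟩ = ⟨j + q, s⟩ := by
  rw [expand, if_neg (by dsimp only; lia), if_neg (by dsimp only; lia)]

lemma pos_cases (q : ℕ) (i j : ℤ) :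
    j < i ∨ (∃ d : Fin (q + 1), j = i + d) ∨ i + q < j := by
  by_cases h : i ≤ j ∧ j ≤ i + q
  · exact .inr (.inl ⟨⟨(j - i).toNat, by lia⟩, by dsimp only; lia⟩)
  · lia

lemma expand_contract (i : ℤ) (y : Address q) : expand i (contract i y) = y := by
  obtain ⟨j, s⟩ := y
  rcases pos_cases q i j with h | ⟨d, rfl⟩ | h
  · rw [contract_of_lt s h, expand_of_lt s h]
  · rw [contract_add_digit, expand_cons]
  · rw [contract_of_gt s h, expand_of_gt s (by lia), sub_add_cancel]

lemma contract_expand (i : ℤ) (y : Address q) : contract i (expand i y) = y := by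
  obtain ⟨j, s⟩ := y
  rcases lt_trichotomy j i with h | rfl | h
  · rw [expand_of_lt s h, contract_of_lt s h]
  · rw [← Stream'.eta s, expand_cons, contract_add_digit]
  · rw [expand_of_gt s h, contract_of_gt s (by lia), add_sub_cancel_right]

lemma contract_shift (j n : ℤ) (s : Stream' (Fin (q + 1))) :
    contract j ⟨n - q, s⟩ =
      ⟨(contract (j + q) ⟨n, s⟩).pos - q, (contract (j + q) ⟨n, s⟩).path⟩ := by
  rcases pos_cases q (j + q) n with h | ⟨d, rfl⟩ | h
  · rw [contract_of_lt s h, contract_of_lt s (by lia)]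
  · rw [contract_add_digit, add_right_comm, add_sub_cancel_right, contract_add_digit,
      add_sub_cancel_right]
  · rw [contract_of_gt s h, contract_of_gt s (by lia)]

lemma contract_contract {i j : ℤ} (h : i < j) (y : Address q) :
    contract j (contract i y) = contract i (contract (j + q) y) := by
  obtain ⟨n, s⟩ := y
  rcases pos_cases q i n with hi | ⟨d, rfl⟩ | hi
  · rw [contract_of_lt s hi, contract_of_lt s (by lia), contract_of_lt s (by lia),
      contract_of_lt s hi]
  · have hd : (d : ℤ) ≤ q := mod_cast d.is_le
    rw [contract_add_digit, contract_of_lt _ h, contract_of_lt s (by lia), contract_add_digit]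
  · rw [contract_of_gt s hi, contract_shift]
    have hpos : i + q < (contract (j + q) ⟨n, s⟩).pos := by
      rcases pos_cases q (j + q) n with hj | ⟨d, rfl⟩ | hj
      · rwa [contract_of_lt s hj]
      · rw [contract_add_digit]
        dsimp only
        lia
      · rw [contract_of_gt s hj]
        dsimp only
        lia
    exact (contract_of_gt _ hpos).symm

/-- The permutation of the addresses by which the generator `x_i` acts. -/
def genPerm (q : ℕ) : ℕ → Equiv.Perm (Address q)
  | 0 =>
    { toFun := fun y => ⟨y.pos - q, y.path⟩
      invFun := fun y => ⟨y.pos + q, y.path⟩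
      left_inv := fun y => by simp
      right_inv := fun y => by simp }
  | i + 1 => ⟨contract i, expand i, expand_contract i, contract_expand i⟩

lemma genPerm_mul_genPerm {i j : ℕ} (h : i < j) :
    genPerm q j * genPerm q i = genPerm q i * genPerm q (j + q) := by
  obtain ⟨j, rfl⟩ := Nat.exists_eq_succ_of_ne_zero (Nat.ne_zero_of_lt h)
  ext1 y
  rw [Nat.succ_add]
  cases i with
  | zero => exact (contract_shift j y.pos y.path).trans (by push_cast; rfl)
  | succ i => exact (contract_contract (by lia) y).trans (by push_cast; rfl)

/-- The permutation representation of the group on addresses. -/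
def permHom (q : ℕ) : FP (q + 1) →* Equiv.Perm (Address q) :=
  PresentedGroup.toGroup (f := genPerm q) <| by
    rintro r ⟨i, j, h, rfl⟩
    simp only [map_mul, map_inv, FreeGroup.lift_apply_of]
    rw [mul_inv_eq_one, mul_inv_eq_iff_eq_mul]
    exact genPerm_mul_genPerm h

instance : MulAction (FP (q + 1)) (Address q) := MulAction.compHom _ (permHom q)

lemma xgen_smul (i : ℕ) (y : Address q) : xgen (q + 1) i • y = genPerm q i y :=
  congrArg (· y) (PresentedGroup.toGroup.of (f := genPerm q) _)

lemma shiftGen_smul (j : ℤ) (s : Stream' (Fin (q + 1))) :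
    shiftGen q • Address.mk j s = ⟨j - q, s⟩ := xgen_smul 0 _

lemma shiftGen_inv_smul (j : ℤ) (s : Stream' (Fin (q + 1))) :
    (shiftGen q)⁻¹ • Address.mk j s = ⟨j + q, s⟩ := by
  rw [inv_smul_eq_iff, shiftGen_smul, add_sub_cancel_right]

lemma caretGen_smul (i : ℕ) (y : Address q) : caretGen q i • y = contract i y :=
  xgen_smul (i + 1) y

lemma caretGen_inv_smul (i : ℕ) (y : Address q) : (caretGen q i)⁻¹ • y = expand i y := by
  rw [inv_smul_eq_iff, caretGen_smul, contract_expand]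

lemma shiftGen_pow_smul (a : ℕ) (j : ℤ) (s : Stream' (Fin (q + 1))) :
    shiftGen q ^ a • Address.mk j s = ⟨j - a * q, s⟩ := by
  induction a with
  | zero => simp
  | succ a ih =>
    rw [pow_succ', mul_smul, ih, shiftGen_smul]
    congr 1
    push_cast
    ring

lemma appendStream_injective {α : Type*} [Nontrivial α] :
    Function.Injective (Stream'.appendStream' : List α → Stream' α → Stream' α) := by
  have hle {v v' : List α} (h : ∀ s, v ++ₛ s = v' ++ₛ s) : v'.length ≤ v.length := by
    by_contra! hlt
    obtain ⟨a, ha⟩ := exists_ne v'[v.length]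
    have hget := congrArg (Stream'.get · v.length) (h (Stream'.const a))
    rw [Stream'.get_append_length, Stream'.get_append_left _ _ _ hlt] at hget
    exact ha hget
  intro v v' h
  have ⟨a⟩ : Nonempty α := inferInstance
  exact Stream'.append_left_injective _ _ _ _ (congrFun h (Stream'.const a))
    ((hle fun s => (congrFun h s).symm).antisymm (hle (congrFun h)))

/-- The group element maps the leaves of a tree, which stand at positions `j, j + 1, …`, to the
corresponding vertices of a copy of this tree below the vertex `v` at position `m`. -/
def Placed (g : FP (q + 1)) : CaretTree q → ℕ → ℤ → List (Fin (q + 1)) → Prop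
  | .leaf, j, m, v => ∀ s, g • Address.mk j s = ⟨m, v ++ₛ s⟩
  | .node f, j, m, v =>
    ∀ k : Fin (q + 1), Placed g (f k) (j + leafOffset (extend f) k) m (v ++ [k])

section Placed

variable {g h : FP (q + 1)} {T : CaretTree q} {j : ℕ} {m : ℤ} {v : List (Fin (q + 1))}

lemma Placed.mul_left {m' : ℤ} {v' : List (Fin (q + 1))} (hp : Placed g T j m v)
    (hh : ∀ s, h • Address.mk m (v ++ₛ s) = ⟨m', v' ++ₛ s⟩) : Placed (h * g) T j m' v' := by
  induction T generalizing j v v' with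
  | leaf => exact fun s => by rw [mul_smul, hp s, hh s]
  | node f ih =>
    intro k
    refine ih k (hp k) fun s => ?_
    rw [Stream'.append_append_stream, Stream'.append_append_stream]
    exact hh _

lemma Placed.mul_right {j' : ℕ} (hp : Placed g T j m v)
    (hh : ∀ (i : ℕ) (s : Stream' (Fin (q + 1))),
      h • Address.mk (j' + i : ℕ) s = ⟨(j + i : ℕ), s⟩) :
    Placed (g * h) T j' m v := by
  induction T generalizing j j' v with
  | leaf => exact fun s => by rw [mul_smul, ← hp s]; exact congrArg _ (hh 0 s)
  | node f ih =>
    intro k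
    refine ih k (hp k) fun i s => ?_
    rw [add_assoc, add_assoc]
    exact hh _ s

lemma Placed.exists_smul_eq (hp : Placed g T j m v) :
    ∃ e : ℕ, (∀ s, g • Address.mk j s = ⟨m, (v ++ List.replicate e 0) ++ₛ s⟩) ∧
      (e = 0 → T = .leaf) := by
  induction T generalizing v with
  | leaf => exact ⟨0, fun s => by simpa using hp s, fun _ => rfl⟩
  | node f ih =>
    obtain ⟨e, he, -⟩ := ih 0 (hp 0)
    refine ⟨e + 1, fun s => ?_, by simp⟩
    rw [List.replicate_succ, List.append_cons]
    exact he s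

lemma Placed.eq_leaf (hq : 0 < q) {m' : ℤ} (hp : Placed g T j m v)
    (h : ∀ s, g • Address.mk j s = ⟨m', v ++ₛ s⟩) : T = .leaf := by
  have : Nontrivial (Fin (q + 1)) := Fin.nontrivial_iff_two_le.2 (by lia)
  obtain ⟨e, he, hleaf⟩ := hp.exists_smul_eq
  have hv : v = v ++ List.replicate e 0 :=
    appendStream_injective <| funext fun s => congrArg Address.path ((h s).symm.trans (he s))
  exact hleaf (by simpa using hv)

end Placed

lemma eq_of_leafOffset_eq {φ ψ : ℕ → CaretTree q} {n : ℕ}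
    (h : ∀ k < n, leafOffset φ k = leafOffset ψ k → φ k = ψ k) : ∀ k < n, φ k = ψ k := by
  intro k
  induction k using Nat.strong_induction_on with
  | _ k ih =>
    exact fun hk => h k hk <| Finset.sum_congr rfl fun i hi => by
      have hi := Finset.mem_range.1 hi
      rw [ih i hi (hi.trans hk)]

lemma Placed.unique (hq : 0 < q) {g : FP (q + 1)} {T T' : CaretTree q} {j : ℕ} {m : ℤ}
    {v : List (Fin (q + 1))} (hp : Placed g T j m v) (hp' : Placed g T' j m v) : T = T' := by
  induction T generalizing j v T' with
  | leaf => exact (hp'.eq_leaf hq hp).symm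
  | node f ih =>
    cases T' with
    | leaf => exact hp.eq_leaf hq hp'
    | node f' =>
      have hext : ∀ k < q + 1, extend f k = extend f' k := by
        refine eq_of_leafOffset_eq fun k hk hoff => ?_
        rw [extend_of_lt f hk, extend_of_lt f' hk]
        have hk' := hp' ⟨k, hk⟩
        rw [← hoff] at hk'
        exact ih ⟨k, hk⟩ (hp ⟨k, hk⟩) hk'
      congr 1
      funext k
      rw [← extend_val f, ← extend_val f', hext k k.2]

/-- The group element acts like the element of a forest with `R` trees and first root at `m`. -/
structure ActsAsForest (g : FP (q + 1)) (m : ℕ) (φ : ℕ → CaretTree q) (R : ℕ) : Prop where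
  smul_of_lt (j : ℤ) (s : Stream' (Fin (q + 1))) : j < m → g • Address.mk j s = ⟨j, s⟩
  smul_add (i : ℕ) (s : Stream' (Fin (q + 1))) :
    g • Address.mk (m + leafOffset φ R + i : ℕ) s = ⟨(m + R + i : ℕ), s⟩
  placed (k : ℕ) : k < R → Placed g (φ k) (m + leafOffset φ k) (m + k : ℕ) []

lemma ActsAsForest.succ {g h : FP (q + 1)} {m : ℕ} {φ : ℕ → CaretTree q} {R : ℕ}
    (hg : ActsAsForest g m φ R) (hh : ActsAsForest h (m + R) (fun _ => φ R) 1) :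
    ActsAsForest (h * g) m φ (R + 1) where
  smul_of_lt j s hj := by
    rw [mul_smul, hg.smul_of_lt j s hj, hh.smul_of_lt j s (by lia)]
  smul_add i s := by
    have hlast := hh.smul_add i s
    rw [leafOffset_succ, leafOffset_zero, zero_add] at hlast
    rw [mul_smul, leafOffset_succ, ← add_assoc, add_assoc _ _ i, hg.smul_add, ← add_assoc, hlast,
      add_assoc m R 1]
  placed k hk := by
    rcases Nat.lt_succ_iff_lt_or_eq.1 hk with hk | rfl
    · exact (hg.placed k hk).mul_left fun s => hh.smul_of_lt _ _ (by lia)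
    · exact (hh.placed 0 one_pos).mul_right hg.smul_add

lemma actsAsForest_forestElem_of_treeElem {m : ℕ} {φ : ℕ → CaretTree q} {R : ℕ}
    (h : ∀ k < R, ActsAsForest (treeElem (φ k) (m + k)) (m + k) (fun _ => φ k) 1) :
    ActsAsForest (forestElem m φ R) m φ R := by
  induction R with
  | zero => exact ⟨fun j s _ => one_smul _ _, fun i s => one_smul _ _, fun k hk => by lia⟩
  | succ R ih => exact (ih fun k hk => h k (by lia)).succ (h R R.lt_succ_self)

lemma actsAsForest_treeElem (T : CaretTree q) (m : ℕ) :
    ActsAsForest (treeElem T m) m (fun _ => T) 1 := by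
  induction T generalizing m with
  | leaf => exact ⟨fun j s _ => one_smul _ _, fun i s => one_smul _ _, fun k hk s => by
      obtain rfl : k = 0 := by lia
      exact one_smul _ _⟩
  | node f ih =>
    have hf : ActsAsForest (forestElem m (extend f) (q + 1)) m (extend f) (q + 1) :=
      actsAsForest_forestElem_of_treeElem fun k hk => by
        rw [extend_of_lt f hk]
        exact ih _ _
    rw [treeElem_node]
    refine ⟨fun j s hj => ?_, fun i s => ?_, fun k hk => ?_⟩
    · rw [mul_smul, hf.smul_of_lt j s hj, caretGen_smul, contract_of_lt s hj]
    · rw [leafOffset_succ, leafOffset_zero, zero_add, leafCount_node, mul_smul, hf.smul_add,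
        caretGen_smul, contract_of_gt s (by lia)]
      congr 1
      lia
    · obtain rfl : k = 0 := by lia
      intro d
      have hd := hf.placed d d.2
      rw [extend_val] at hd
      refine hd.mul_left fun s => ?_
      rw [caretGen_smul, Nat.cast_add, List.nil_append]
      exact contract_add_digit _ d _

lemma actsAsForest_forestElem (m : ℕ) (φ : ℕ → CaretTree q) (R : ℕ) :
    ActsAsForest (forestElem m φ R) m φ R :=
  actsAsForest_forestElem_of_treeElem fun _ _ => actsAsForest_treeElem _ _

lemma placed_shiftGen_pow_mul_forestElem (a : ℕ) (φ : ℕ → CaretTree q) {k R : ℕ} (hk : k < R) :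
    Placed (shiftGen q ^ a * forestElem 0 φ R) (φ k) (leafOffset φ k) (k - a * q) [] := by
  have hp := (actsAsForest_forestElem 0 φ R).placed k hk
  rw [zero_add, zero_add] at hp
  exact hp.mul_left fun s => shiftGen_pow_smul a k _

lemma eq_of_blockForest_eq {bs bs' : List (Block q)} (hlen : bs.length = bs'.length)
    (h : ∀ k < bs.length * q, blockForest bs k = blockForest bs' k) : bs = bs' := by
  induction bs generalizing bs' with
  | nil => exact (List.length_eq_zero_iff.1 hlen.symm).symm
  | cons β bs ih =>
    obtain _ | ⟨β', bs'⟩ := bs'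
    · simp at hlen
    rw [List.length_cons, Nat.succ_mul] at h
    congr 1
    · funext c
      have hc := h c (by lia)
      rwa [blockForest_cons_of_lt β bs c.2, blockForest_cons_of_lt β' bs' c.2] at hc
    · refine ih (Nat.succ_injective hlen) fun k hk => ?_
      have hk := h (q + k) (by lia)
      rwa [blockForest_cons_add, blockForest_cons_add] at hk

lemma exponent_eq_of_normalElem_eq (hq : 0 < q) {a a' : ℕ} {bs bs' : List (Block q)}
    (h : normalElem a bs = normalElem a' bs') : a = a' := by
  have hsmul (a : ℕ) (bs : List (Block q)) (s : Stream' (Fin (q + 1))) :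
      normalElem a bs • Address.mk (-1) s = ⟨-1 - a * q, s⟩ := by
    rw [normalElem, mul_smul, (actsAsForest_forestElem 0 _ _).smul_of_lt _ _ (by simp),
      shiftGen_pow_smul]
  have hpos := congrArg Address.pos (hsmul a bs (Stream'.const 0))
  rw [h, hsmul] at hpos
  have hmul : a * q = a' * q := by
    dsimp only at hpos
    lia
  exact Nat.eq_of_mul_eq_mul_right hq hmul

lemma blockElem_injective (hq : 0 < q) : Function.Injective (blockElem (q := q)) := by
  intro bs bs' h
  have hlen : bs.length = bs'.length := exponent_eq_of_normalElem_eq hq h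
  refine eq_of_blockForest_eq hlen (eq_of_leafOffset_eq fun k hk hoff => ?_)
  rw [blockElem, blockElem, normalElem, normalElem, ← hlen] at h
  have hp := placed_shiftGen_pow_mul_forestElem bs.length (blockForest bs) hk
  rw [h, hoff] at hp
  exact hp.unique hq (placed_shiftGen_pow_mul_forestElem bs.length (blockForest bs') hk)

end Action

/-! ### Crossings of the start of a block -/

section Crossing

variable {q : ℕ}

/-- The leftmost address over the positions `c * q, …, c * q + q - 1`. -/
def blockStart (q : ℕ) (c : ℤ) : Address q := ⟨c * q, Stream'.const 0⟩

open Classical in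
/-- Whether a letter `x_i` or `x_i⁻¹`, applied to an address, passes along (in one direction or the
other) the edge from `blockStart q 1` to its image under `x_i`. -/
noncomputable def crossing (x : Letter q) (y : Address q) : ℕ :=
  if (if x.2 then y else letterElem x • y) = blockStart q 1 then 1 else 0

/-- The number of crossings while the letters of a word act one after the other on an address. -/
noncomputable def crossingCount : List (Letter q) → Address q → ℕ
  | [], _ => 0
  | x :: l, y => crossingCount l y + crossing x (wordElem l • y)

lemma sum_crossingCount_le (l : List (Letter q)) (S : Finset (Address q)) :
    ∑ y ∈ S, crossingCount l y ≤ l.length := by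
  classical
  induction l with
  | nil => simp [crossingCount]
  | cons x l ih =>
    have hone : ∑ y ∈ S, crossing x (wordElem l • y) ≤ 1 := by
      simp only [crossing, Finset.sum_boole, Nat.cast_id]
      refine Finset.card_le_one.2 fun y hy y' hy' => ?_
      have h := (Finset.mem_filter.1 hy).2.trans (Finset.mem_filter.1 hy').2.symm
      apply MulAction.injective (wordElem l)
      split_ifs at h
      exacts [h, MulAction.injective _ h]
    simp only [crossingCount, Finset.sum_add_distrib, List.length_cons]
    lia

lemma blockStart_injective (hq : 0 < q) : Function.Injective (blockStart q) := fun _ _ h =>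
  mul_right_cancel₀ (by lia : (q : ℤ) ≠ 0) (congrArg Address.pos h)

lemma crossing_true_of_eq_blockStart (hq : 0 < q) (i : Fin (q + 1)) {c : ℤ} {y : Address q}
    (h : y = blockStart q c) : crossing (i, true) y = if c = 1 then 1 else 0 := by
  simp [crossing, h, (blockStart_injective hq).eq_iff]

lemma crossing_false_of_smul_eq_blockStart (hq : 0 < q) {i : Fin (q + 1)} {c : ℤ} {y : Address q}
    (h : letterElem (q := q) (i, false) • y = blockStart q c) :
    crossing (i, false) y = if c = 1 then 1 else 0 := by
  simp [crossing, h, (blockStart_injective hq).eq_iff]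

lemma letterElem_zero_true_smul (m : ℤ) (s : Stream' (Fin (q + 1))) :
    letterElem (q := q) (0, true) • Address.mk m s = ⟨m - q, s⟩ := shiftGen_smul m s

lemma letterElem_zero_false_smul (m : ℤ) (s : Stream' (Fin (q + 1))) :
    letterElem (q := q) (0, false) • Address.mk m s = ⟨m + q, s⟩ := shiftGen_inv_smul m s

lemma letterElem_succ_true_smul (k : Fin q) (y : Address q) :
    letterElem (q := q) (k.succ, true) • y = contract k y := caretGen_smul k y

lemma letterElem_succ_false_smul (k : Fin q) (y : Address q) :
    letterElem (q := q) (k.succ, false) • y = expand k y := caretGen_inv_smul k y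

lemma letterElem_true_smul_of_le (i : Fin (q + 1)) {m : ℤ} (s : Stream' (Fin (q + 1)))
    (h : 2 * q ≤ m) : letterElem (q := q) (i, true) • Address.mk m s = ⟨m - q, s⟩ := by
  cases i using Fin.cases with
  | zero => exact letterElem_zero_true_smul m s
  | succ k =>
    have := k.2
    rw [letterElem_succ_true_smul, contract_of_gt s (by lia)]

lemma letterElem_false_smul_of_le (i : Fin (q + 1)) {m : ℤ} (s : Stream' (Fin (q + 1)))
    (h : q ≤ m) : letterElem (q := q) (i, false) • Address.mk m s = ⟨m + q, s⟩ := by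
  cases i using Fin.cases with
  | zero => exact letterElem_zero_false_smul m s
  | succ k =>
    have := k.2
    rw [letterElem_succ_false_smul, expand_of_gt s (by lia)]

lemma letterElem_zero_true_smul_blockStart (c : ℤ) :
    letterElem (q := q) (0, true) • blockStart q c = blockStart q (c - 1) := by
  rw [blockStart, letterElem_zero_true_smul, blockStart, sub_one_mul]

lemma letterElem_zero_false_smul_blockStart (c : ℤ) :
    letterElem (q := q) (0, false) • blockStart q c = blockStart q (c + 1) := by
  rw [blockStart, letterElem_zero_false_smul, blockStart, add_one_mul]

lemma letterElem_succ_true_smul_blockStart (k : Fin q) {c : ℤ} (hc : c ≤ 0) :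
    letterElem (q := q) (k.succ, true) • blockStart q c = blockStart q c := by
  have hcq : c * q ≤ 0 := mul_nonpos_of_nonpos_of_nonneg hc (by lia)
  rw [letterElem_succ_true_smul, blockStart]
  by_cases h : c * q < (k : ℕ)
  · exact contract_of_lt _ h
  · have hk : ((k : ℕ) : ℤ) = c * q := by lia
    have hdigit := contract_add_digit (c * q) (0 : Fin (q + 1)) (Stream'.const 0)
    rw [Fin.val_zero, Nat.cast_zero, add_zero, ← Stream'.const_eq] at hdigit
    rw [hk, hdigit]

lemma letterElem_succ_false_smul_blockStart (k : Fin q) {c : ℤ} (hc : c ≤ 0) :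
    letterElem (q := q) (k.succ, false) • blockStart q c = blockStart q c :=
  inv_smul_eq_iff.2 (letterElem_succ_true_smul_blockStart k hc).symm

/-- The sum of the digits of a finite path. -/
def digitSum (v : List (Fin (q + 1))) : ℕ := (v.map Fin.val).sum

lemma digitSum_cons (d : Fin (q + 1)) (v : List (Fin (q + 1))) :
    digitSum (d :: v) = d + digitSum v := List.sum_cons

lemma append_cons_ne_const (v : List (Fin (q + 1))) {d : Fin (q + 1)} (hd : d ≠ 0)
    (s : Stream' (Fin (q + 1))) : v ++ₛ Stream'.cons d s ≠ Stream'.const 0 := fun h =>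
  hd <| by simpa using congrArg (Stream'.get · v.length) h

lemma exists_contract_append_eq (i m : ℤ) (v : List (Fin (q + 1))) :
    ∃ m' v', m' + digitSum v' ≡ m + digitSum v [ZMOD q] ∧
      ∀ s, contract i ⟨m, v ++ₛ s⟩ = ⟨m', v' ++ₛ s⟩ := by
  rcases pos_cases q i m with h | ⟨d, rfl⟩ | h
  · exact ⟨m, v, rfl, fun s => contract_of_lt _ h⟩
  · refine ⟨i, d :: v, ?_, fun s => contract_add_digit _ _ _⟩
    rw [digitSum_cons, Nat.cast_add, add_assoc]
  · exact ⟨m - q, v, Int.modEq_iff_dvd.2 ⟨1, by ring⟩, fun s => contract_of_gt _ h⟩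

lemma exists_expand_append_eq {i m : ℤ} {v : List (Fin (q + 1))} (h : m = i → v ≠ []) :
    ∃ m' v', m' + digitSum v' ≡ m + digitSum v [ZMOD q] ∧
      ∀ s, expand i ⟨m, v ++ₛ s⟩ = ⟨m', v' ++ₛ s⟩ := by
  rcases lt_trichotomy m i with hm | rfl | hm
  · exact ⟨m, v, rfl, fun s => expand_of_lt _ hm⟩
  · obtain ⟨d, v, rfl⟩ := List.exists_cons_of_ne_nil (h rfl)
    refine ⟨m + d, v, ?_, fun s => expand_cons _ _ _⟩
    rw [digitSum_cons, Nat.cast_add, add_assoc]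
  · exact ⟨m + q, v, Int.modEq_iff_dvd.2 ⟨-1, by ring⟩, fun s => expand_of_gt _ hm⟩

lemma exists_letterElem_smul_append_eq {x : Letter q} {m : ℤ} {v : List (Fin (q + 1))}
    (h : ∀ k : Fin q, x = (k.succ, false) → m = (k : ℕ) → v ≠ []) :
    ∃ m' v', m' + digitSum v' ≡ m + digitSum v [ZMOD q] ∧
      ∀ s, letterElem x • Address.mk m (v ++ₛ s) = ⟨m', v' ++ₛ s⟩ := by
  obtain ⟨i, _ | _⟩ := x <;> cases i using Fin.cases with
  | zero =>
    first
      | exact ⟨m + q, v, Int.modEq_iff_dvd.2 ⟨-1, by ring⟩,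
          fun s => letterElem_zero_false_smul _ _⟩
      | exact ⟨m - q, v, Int.modEq_iff_dvd.2 ⟨1, by ring⟩, fun s => letterElem_zero_true_smul _ _⟩
  | succ k =>
    first
      | simpa only [letterElem_succ_false_smul] using exists_expand_append_eq (h k rfl)
      | simpa only [letterElem_succ_true_smul] using exists_contract_append_eq k m v

/-- The group element takes the positions `b * q + (a + d - q)`, where `q ≤ a + d`, below one vertex
`v` at position `m`, to the child `d` of this vertex. -/
structure Nested (b : ℤ) (g : FP (q + 1)) (a : ℕ) (m : ℤ) (v : List (Fin (q + 1))) : Prop where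
  lt : a < q
  modEq : m + digitSum v ≡ a [ZMOD q]
  smul_eq (d : Fin (q + 1)) (s : Stream' (Fin (q + 1))) : q ≤ a + d →
    g • Address.mk (b * q + (a + d - q)) s = ⟨m, v ++ₛ Stream'.cons d s⟩

/-- What `n` crossings say about the action of a group element near `blockStart q b`. -/
inductive Phase (b : ℤ) (g : FP (q + 1)) (n : ℕ) : Prop
  | translated (c : ℤ) (hn : n = 0) (hc : 1 ≤ c)
      (h : ∀ (j : ℕ) (s : Stream' (Fin (q + 1))),
        g • Address.mk (b * q + j) s = ⟨c * q + j, s⟩)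
  | left (c : ℤ) (hn : n = 1) (hc : c ≤ 0) (h : g • blockStart q b = blockStart q c)
  | nested (a : ℕ) (m : ℤ) (v : List (Fin (q + 1))) (hn : n = 1) (h : Nested b g a m v)
  | returned (c : ℤ) (hn : 2 ≤ n) (hc : 1 ≤ c) (h : g • blockStart q b = blockStart q c)
  | recrossed (hn : 3 ≤ n)

section Step

variable {b : ℤ} {g : FP (q + 1)}

lemma Nested.exists_smul_blockStart {a : ℕ} {m : ℤ} {v : List (Fin (q + 1))}
    (h : Nested b g a m v) :
    ∃ d : Fin (q + 1), (d : ℕ) = q - a ∧ d ≠ 0 ∧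
      ∀ s, g • Address.mk (b * q) s = ⟨m, v ++ₛ Stream'.cons d s⟩ := by
  have hlt := h.lt
  refine ⟨⟨q - a, by lia⟩, rfl, fun h0 => ?_, fun s => ?_⟩
  · have := congrArg Fin.val h0
    simp only [Fin.val_zero] at this
    lia
  · rw [← h.smul_eq _ s (by simp only; lia)]
    congr 2
    simp only
    lia

lemma phase_mul_of_translated (hq : 0 < q) {c : ℤ} (hc : 1 ≤ c)
    (h : ∀ (j : ℕ) (s : Stream' (Fin (q + 1))),
        g • Address.mk (b * q + j) s = ⟨c * q + j, s⟩) (x : Letter q) :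
    Phase b (letterElem x * g) (crossing x (g • blockStart q b)) := by
  have hstart : g • blockStart q b = blockStart q c := by
    simpa [blockStart] using h 0 (Stream'.const 0)
  obtain ⟨i, _ | _⟩ := x
  · have hsmul (j : ℕ) (s : Stream' (Fin (q + 1))) :
        letterElem (q := q) (i, false) • Address.mk (c * q + j) s = ⟨(c + 1) * q + j, s⟩ := by
      rw [letterElem_false_smul_of_le i s (by nlinarith)]
      congr 1
      ring
    have hcross := crossing_false_of_smul_eq_blockStart hq
      (show letterElem (q := q) (i, false) • g • blockStart q b = blockStart q (c + 1) by
        rw [hstart]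
        simpa [blockStart] using hsmul 0 (Stream'.const 0))
    refine .translated (c + 1) (by rw [hcross, if_neg (by lia)]) (by lia) fun j s => ?_
    rw [mul_smul, h, hsmul]
  have hcross := crossing_true_of_eq_blockStart hq i hstart
  rcases hc.eq_or_lt with rfl | hc
  · cases i using Fin.cases with
    | zero =>
      refine .left 0 hcross le_rfl ?_
      rw [mul_smul, hstart, letterElem_zero_true_smul_blockStart, sub_self]
    | succ k =>
      refine .nested k k [] hcross ⟨k.2, by simp [digitSum], fun d s hd => ?_⟩
      have hj := h (k + d - q) s
      rw [Nat.cast_sub hd, Nat.cast_add] at hj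
      rw [mul_smul, hj, one_mul, add_sub_cancel, letterElem_succ_true_smul, contract_add_digit]
      rfl
  · refine .translated (c - 1) (by rw [hcross, if_neg hc.ne']) (by lia) fun j s => ?_
    rw [mul_smul, h, letterElem_true_smul_of_le i s (by nlinarith)]
    congr 1
    ring

lemma phase_mul_of_left (hq : 0 < q) {c : ℤ} (hc : c ≤ 0) (h : g • blockStart q b = blockStart q c)
    (x : Letter q) : Phase b (letterElem x * g) (1 + crossing x (g • blockStart q b)) := by
  obtain ⟨i, _ | _⟩ := x
  · cases i using Fin.cases with
    | zero =>
      have hsmul : letterElem (q := q) (0, false) • g • blockStart q b = blockStart q (c + 1) := by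
        rw [h, letterElem_zero_false_smul_blockStart]
      have hcross := crossing_false_of_smul_eq_blockStart hq hsmul
      rw [← mul_smul] at hsmul
      rcases hc.eq_or_lt with rfl | hc
      · exact .returned 1 (by rw [hcross]; rfl) le_rfl hsmul
      · exact .left (c + 1) (by rw [hcross, if_neg (by lia)]) (by lia) hsmul
    | succ k =>
      have hsmul : letterElem (q := q) (k.succ, false) • g • blockStart q b = blockStart q c := by
        rw [h, letterElem_succ_false_smul_blockStart k hc]
      have hcross := crossing_false_of_smul_eq_blockStart hq hsmul
      exact .left c (by rw [hcross, if_neg (by lia)]) hc (by rw [mul_smul, hsmul])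
  have hcross := crossing_true_of_eq_blockStart hq i h
  rw [if_neg (by lia)] at hcross
  cases i using Fin.cases with
  | zero =>
    refine .left (c - 1) (by rw [hcross]) (by lia) ?_
    rw [mul_smul, h, letterElem_zero_true_smul_blockStart]
  | succ k =>
    refine .left c (by rw [hcross]) hc ?_
    rw [mul_smul, h, letterElem_succ_true_smul_blockStart k hc]

lemma phase_mul_of_nested {a : ℕ} {m : ℤ} {v : List (Fin (q + 1))} (h : Nested b g a m v)
    (x : Letter q) : Phase b (letterElem x * g) (1 + crossing x (g • blockStart q b)) := by
  obtain ⟨d, hd, hd0, hstart⟩ := h.exists_smul_blockStart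
  by_cases hexit : ∃ k : Fin q, x = (k.succ, false) ∧ m = (k : ℕ) ∧ v = []
  · obtain ⟨k, rfl, rfl, rfl⟩ := hexit
    have hka : (k : ℕ) = a := by
      have hmod := h.modEq
      rw [digitSum, List.map_nil, List.sum_nil, Nat.cast_zero, add_zero] at hmod
      exact (Int.natCast_modEq_iff.1 hmod).eq_of_lt_of_lt k.2 h.lt
    have hsmul : letterElem (q := q) (k.succ, false) • g • blockStart q b = blockStart q 1 := by
      rw [blockStart, hstart, letterElem_succ_false_smul]
      refine (expand_cons _ _ _).trans ?_
      rw [blockStart]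
      congr 1
      lia
    have hcross : crossing (k.succ, false) (g • blockStart q b) = 1 := by
      simp [crossing, hsmul]
    exact .returned 1 (by rw [hcross]) le_rfl (by rw [mul_smul, hsmul])
  · push Not at hexit
    obtain ⟨m', v', hmod, hsmul⟩ := exists_letterElem_smul_append_eq hexit
    have hne (m : ℤ) (v : List (Fin (q + 1))) :
        Address.mk m (v ++ₛ Stream'.cons d (Stream'.const 0)) ≠ blockStart q 1 :=
      fun heq => append_cons_ne_const v hd0 _ (congrArg Address.path heq)
    have hcross : crossing x (g • blockStart q b) = 0 := by
      rw [blockStart, hstart, crossing, hsmul, if_neg]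
      split_ifs
      exacts [hne _ _, hne _ _]
    refine .nested a m' v' (by rw [hcross]) ⟨h.lt, hmod.trans h.modEq, fun e s he => ?_⟩
    rw [mul_smul, h.smul_eq e s he, hsmul]

lemma phase_mul_of_returned (hq : 0 < q) {c : ℤ} {n : ℕ} (hn : 2 ≤ n) (hc : 1 ≤ c)
    (h : g • blockStart q b = blockStart q c) (x : Letter q) :
    Phase b (letterElem x * g) (n + crossing x (g • blockStart q b)) := by
  obtain ⟨i, _ | _⟩ := x
  · refine .returned (c + 1) (by lia) (by lia) ?_
    rw [mul_smul, h, blockStart, letterElem_false_smul_of_le i _ (by nlinarith), blockStart,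
      add_one_mul]
  rcases hc.eq_or_lt with rfl | hc
  · refine .recrossed ?_
    rw [crossing_true_of_eq_blockStart hq i h, if_pos rfl]
    lia
  · refine .returned (c - 1) (by lia) (by lia) ?_
    rw [mul_smul, h, blockStart, letterElem_true_smul_of_le i _ (by nlinarith), blockStart,
      sub_one_mul]

end Step

lemma phase_wordElem (hq : 0 < q) (l : List (Letter q)) {b : ℤ} (hb : 1 ≤ b) :
    Phase b (wordElem l) (crossingCount l (blockStart q b)) := by
  induction l with
  | nil => exact .translated b rfl hb fun j s => one_smul _ _
  | cons x l ih =>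
    rw [wordElem_cons, crossingCount]
    cases ih with
    | translated c hn hc h =>
      rw [hn, zero_add]
      exact phase_mul_of_translated hq hc h x
    | left c hn hc h =>
      rw [hn]
      exact phase_mul_of_left hq hc h x
    | nested a m v hn h =>
      rw [hn]
      exact phase_mul_of_nested h x
    | returned c hn hc h => exact phase_mul_of_returned hq hn hc h x
    | recrossed hn => exact .recrossed (by lia)

end Crossing

/-! ### Passages and the lower bound for the length -/

section LowerBound

variable {q : ℕ}

/-- The number of crossings on the way of the leftmost address at position `i` under a word. -/
noncomputable def passages (l : List (Letter q)) (i : ℕ) : ℕ :=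
  crossingCount l ⟨i, Stream'.const 0⟩

lemma sum_range_passages_le (l : List (Letter q)) (n : ℕ) :
    ∑ i ∈ Finset.range n, passages l i ≤ l.length := by
  have hinj : Function.Injective fun i : ℕ => (⟨i, Stream'.const 0⟩ : Address q) :=
    fun i j h => Nat.cast_injective (congrArg Address.pos h)
  have hsum := sum_crossingCount_le l ((Finset.range n).map ⟨_, hinj⟩)
  rwa [Finset.sum_map] at hsum

lemma phase_of_modEq_zero (hq : 0 < q) (l : List (Letter q)) {n : ℕ} (hn : 0 < n)
    (hmod : n ≡ 0 [MOD q]) : ∃ b : ℤ, n = b * q ∧ Phase b (wordElem l) (passages l n) := by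
  obtain ⟨b, rfl⟩ := (Nat.modEq_zero_iff_dvd.1 hmod)
  refine ⟨b, by push_cast; ring, ?_⟩
  have hphase := phase_wordElem hq l (b := b) (by exact_mod_cast Nat.pos_of_mul_pos_left hn)
  rwa [blockStart, ← Nat.cast_mul, mul_comm b q] at hphase

lemma leafCount_pos (T : CaretTree q) : 0 < T.leafCount := by
  induction T with
  | leaf => exact one_pos
  | node f ih => exact Finset.sum_pos (fun k _ => ih k) Finset.univ_nonempty

lemma le_leafOffset (φ : ℕ → CaretTree q) (k : ℕ) : k ≤ leafOffset φ k := by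
  calc k = ∑ i ∈ Finset.range k, 1 := by simp
    _ ≤ _ := Finset.sum_le_sum fun i _ => leafCount_pos (φ i)

lemma leafOffset_add (φ : ℕ → CaretTree q) (k i : ℕ) :
    leafOffset φ (k + i) = leafOffset φ k + leafOffset (fun i => φ (k + i)) i :=
  Finset.sum_range_add _ k i

lemma sum_range_leafOffset (φ : ℕ → CaretTree q) (V : ℕ → ℕ) (R : ℕ) :
    ∑ i ∈ Finset.range (leafOffset φ R), V i =
      ∑ k ∈ Finset.range R, ∑ i ∈ Finset.range (φ k).leafCount, V (leafOffset φ k + i) := by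
  induction R with
  | zero => rfl
  | succ R ih => rw [leafOffset_succ, Finset.sum_range_add, ih, Finset.sum_range_succ]

lemma eq_leaf_of_leafOffset_eq {φ : ℕ → CaretTree q} {k n : ℕ}
    (h : ∀ i < n, leafOffset φ (k + i) = leafOffset φ k + i → φ (k + i) = .leaf) :
    ∀ i < n, φ (k + i) = .leaf := by
  refine eq_of_leafOffset_eq (ψ := fun _ => .leaf) fun i hi hoff => h i hi ?_
  rw [leafOffset_add, hoff]
  simp [leafOffset, CaretTree.leafCount]

lemma eq_of_append_singleton_eq {v v' : List (Fin (q + 1))} {d k : Fin (q + 1)} (hd : d ≠ 0) {e : ℕ}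
    (h : v' ++ [d] = v ++ [k] ++ List.replicate e 0) : v' = v ∧ d = k := by
  cases e with
  | zero => simpa using h
  | succ e =>
    rw [List.replicate_succ', ← List.append_assoc] at h
    exact absurd (by simpa using (List.append_inj' h rfl).2) hd

section Nested

variable {b m m' : ℤ} {g : FP (q + 1)} {a : ℕ} {v v' : List (Fin (q + 1))}

lemma Nested.eq_of_placed (hq : 0 < q) (hn : Nested b g a m' v') {T : CaretTree q} {j : ℕ}
    {k : Fin (q + 1)} (hj : (j : ℤ) = b * q) (hp : Placed g T j m (v ++ [k])) :
    m' = m ∧ v' = v ∧ (k : ℕ) = q - a := by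
  have : Nontrivial (Fin (q + 1)) := Fin.nontrivial_iff_two_le.2 (by lia)
  obtain ⟨d, hd, hd0, hnested⟩ := hn.exists_smul_blockStart
  obtain ⟨e, hplaced, -⟩ := hp.exists_smul_eq
  have heq (s : Stream' (Fin (q + 1))) :
      Address.mk m' ((v' ++ [d]) ++ₛ s) = ⟨m, (v ++ [k] ++ List.replicate e 0) ++ₛ s⟩ := by
    rw [← hplaced, hj, hnested, Stream'.append_append_stream]
    rfl
  have hlist : v' ++ [d] = v ++ [k] ++ List.replicate e 0 :=
    appendStream_injective <| funext fun s => congrArg Address.path (heq s)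
  obtain ⟨hv, rfl⟩ := eq_of_append_singleton_eq hd0 hlist
  exact ⟨congrArg Address.pos (heq (Stream'.const 0)), hv, hd⟩

lemma Nested.leavesBeyondBlock (hq : 0 < q) (hn : Nested b g a m' v')
    {f : Fin (q + 1) → CaretTree q} {j : ℕ} (hp : Placed g (.node f) j m v)
    (hj : ((j + leafOffset (extend f) (q - j % q) : ℕ) : ℤ) = b * q) :
    LeavesBeyondBlock f (j % q) := by
  have hlt : j % q < q := Nat.mod_lt j hq
  obtain ⟨rfl, rfl, hsub⟩ := hn.eq_of_placed hq hj (hp ⟨q - j % q, by lia⟩)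
  have ha : a = j % q := by
    have := hn.lt
    dsimp only at hsub
    lia
  have hleaf : ∀ i < j % q + 1, extend f (q - j % q + i) = .leaf := by
    refine eq_leaf_of_leafOffset_eq fun i hi hoff => ?_
    rw [extend_of_lt f (by lia)]
    refine (hp ⟨q - j % q + i, by lia⟩).eq_leaf (m' := m') hq fun s => ?_
    rw [Stream'.append_append_stream, hoff]
    refine Eq.trans ?_ (hn.smul_eq ⟨q - j % q + i, by lia⟩ s (by dsimp only; lia))
    congr 2
    dsimp only
    lia
  intro k hk
  have hkey := hleaf (k - (q - j % q)) (by lia)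
  rwa [Nat.add_sub_cancel' (by lia), extend_val] at hkey

end Nested

lemma leavesBeyondBlock_or_three_le_passages (hq : 0 < q) (l : List (Letter q))
    {f : Fin (q + 1) → CaretTree q} {j : ℕ} {m : ℤ} {v : List (Fin (q + 1))}
    (hp : Placed (wordElem l) (.node f) j m v) :
    (LeavesBeyondBlock f (j % q) ∧ 1 ≤ passages l (j + leafOffset (extend f) (q - j % q))) ∨
      3 ≤ passages l (j + leafOffset (extend f) (q - j % q)) := by
  have hlt : j % q < q := Nat.mod_lt j hq
  have hmod : j + leafOffset (extend f) (q - j % q) ≡ 0 [MOD q] := by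
    refine ((Nat.mod_modEq j q).symm.add (leafOffset_modEq _ _)).trans ?_
    rw [Nat.add_sub_cancel' hlt.le]
    exact Nat.modEq_zero_iff_dvd.2 dvd_rfl
  have hle := le_leafOffset (extend f) (q - j % q)
  obtain ⟨b, hb, hphase⟩ := phase_of_modEq_zero hq l (by lia) hmod
  have hne (c : ℤ) : wordElem l • blockStart q b ≠ blockStart q c := fun heq => by
    obtain ⟨e, he, -⟩ := (hp ⟨q - j % q, by lia⟩).exists_smul_eq
    rw [blockStart, ← hb, he, Stream'.append_append_stream, Stream'.append_append_stream] at heq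
    refine append_cons_ne_const v (Fin.ne_of_val_ne ?_) _ (congrArg Address.path heq)
    rw [Fin.val_zero]
    dsimp only
    lia
  cases hphase with
  | translated c hn hc h =>
    exact absurd (by simpa [blockStart] using h 0 (Stream'.const 0)) (hne c)
  | left c hn hc h => exact absurd h (hne c)
  | nested a m' v' hn h => exact .inl ⟨h.leavesBeyondBlock hq hp hb, hn.ge⟩
  | returned c hn hc h => exact absurd h (hne c)
  | recrossed hn => exact .inr hn

lemma passages_add_weight_le (hq : 0 < q) (l : List (Letter q)) {T : CaretTree q} {j : ℕ} {m : ℤ}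
    {v : List (Fin (q + 1))} (hp : Placed (wordElem l) T j m v) :
    passages l j + T.weight j ≤ ∑ i ∈ Finset.range T.leafCount, passages l (j + i) := by
  induction T generalizing j v with
  | leaf => simp [CaretTree.leafCount, CaretTree.weight]
  | node f ih =>
    have hlt : j % q < q := Nat.mod_lt j hq
    have hchild : ∀ k ∈ Finset.range (q + 1),
        passages l (j + leafOffset (extend f) k) + (extend f k).weight (j + k) ≤
          ∑ i ∈ Finset.range (extend f k).leafCount,
            passages l (j + (leafOffset (extend f) k + i)) := fun k hk => by
      have hk := Finset.mem_range.1 hk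
      have hsum := ih ⟨k, hk⟩ (hp ⟨k, hk⟩)
      rw [← extend_of_lt f hk,
        CaretTree.weight_congr _ ((leafOffset_modEq (extend f) k).add_left j)] at hsum
      simpa only [add_assoc] using hsum
    have hweight : ∑ k ∈ Finset.range (q + 1), (extend f k).weight (j + k) =
        ∑ k : Fin (q + 1), (f k).weight (j + k) := by
      rw [← Fin.sum_univ_eq_sum_range (fun k => (extend f k).weight (j + k))]
      simp only [extend_val]
    have hpair : passages l j + passages l (j + leafOffset (extend f) (q - j % q)) ≤
        ∑ k ∈ Finset.range (q + 1), passages l (j + leafOffset (extend f) k) := by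
      have hsub : ({0, q - j % q} : Finset ℕ) ⊆ Finset.range (q + 1) := by
        simp [Finset.insert_subset_iff]
      refine le_of_eq_of_le ?_ (Finset.sum_le_sum_of_subset hsub)
      rw [Finset.sum_pair (by lia), leafOffset_zero, add_zero]
    have hsum := Finset.sum_le_sum hchild
    rw [Finset.sum_add_distrib, hweight] at hsum
    rw [leafCount_node, sum_range_leafOffset (extend f) fun i => passages l (j + i),
      CaretTree.weight]
    rcases leavesBeyondBlock_or_three_le_passages hq l hp with ⟨hblock, hone⟩ | hthree
    · rw [if_pos hblock]
      lia
    · split_ifs <;> lia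

lemma exists_block_normalForm {g : FP (q + 1)} (hq : 0 < q) (hg : g ∈ Fplus (q + 1)) :
    ∃ a φ M, a < M ∧ g = shiftGen q ^ a * forestElem 0 φ (M * q) ∧
      ∀ b < M, a < b → ∃ i, b * q + i < M * q ∧ φ (b * q + i) ≠ .leaf := by
  classical
  obtain ⟨a, φ, R, hφ, hgr⟩ := exists_eq_shiftGen_pow_mul_forestElem hg
  have hex : ∃ M, a < M ∧ ∀ i, M * q ≤ i → φ i = .leaf :=
    ⟨R + a + 1, by lia, fun i hi => hφ i (by nlinarith)⟩
  obtain ⟨haM, hleaf⟩ := Nat.find_spec hex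
  refine ⟨a, φ, Nat.find hex, haM, ?_, fun b hb hab => ?_⟩
  · rw [hgr, ← forestElem_eq_of_le 0 (le_max_left R (Nat.find hex * q)) hφ,
      forestElem_eq_of_le 0 (le_max_right R (Nat.find hex * q)) hleaf]
  · by_contra! hcon
    refine Nat.find_min hex hb ⟨hab, fun i hi => ?_⟩
    obtain ⟨i, rfl⟩ := Nat.exists_eq_add_of_le hi
    rcases lt_or_ge (b * q + i) (Nat.find hex * q) with hi | hi
    exacts [hcon i hi, hleaf _ hi]

lemma one_le_passages_blockRoot (hq : 0 < q) (l : List (Letter q)) {a M : ℕ} {φ : ℕ → CaretTree q}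
    (hM : ∀ b < M, a < b → ∃ i, b * q + i < M * q ∧ φ (b * q + i) ≠ .leaf)
    (hp : ∀ k < M * q, Placed (wordElem l) (φ k) (leafOffset φ k) (k - a * q) [])
    {b : ℕ} (hb : 0 < b) (hbM : b < M) : 1 ≤ passages l (leafOffset φ (b * q)) := by
  have hpos : 0 < leafOffset φ (b * q) := (Nat.mul_pos hb hq).trans_le (le_leafOffset φ _)
  have hmod : leafOffset φ (b * q) ≡ 0 [MOD q] :=
    (leafOffset_modEq φ _).trans (Nat.modEq_zero_iff_dvd.2 (dvd_mul_left q b))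
  obtain ⟨b', hb', hphase⟩ := phase_of_modEq_zero hq l hpos hmod
  cases hphase with
  | translated c hn hc h =>
    rw [← hb'] at h
    have hroot : (b * q - a * q : ℤ) = c * q := by
      obtain ⟨e, he, -⟩ := (hp (b * q) (Nat.mul_lt_mul_of_pos_right hbM hq)).exists_smul_eq
      have heq := (he (Stream'.const 0)).symm.trans (by simpa using h 0 (Stream'.const 0))
      exact_mod_cast congrArg Address.pos heq
    have hab : a < b := by
      have hq' : (0 : ℤ) < q := mod_cast hq
      have : (b - a : ℤ) = c := mul_right_cancel₀ hq'.ne' (by rw [sub_mul, hroot])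
      lia
    obtain ⟨i, hi, hne⟩ := hM b hbM hab
    refine absurd (eq_leaf_of_leafOffset_eq (n := M * q - b * q) (fun i hi hoff => ?_) i (by lia))
      hne
    refine (hp (b * q + i) (by lia)).eq_leaf (m' := c * q + i) hq fun s => ?_
    rw [hoff, Nat.cast_add]
    exact h i s
  | left c hn hc h => lia
  | nested a m' v' hn h => lia
  | returned c hn hc h => lia
  | recrossed hn => lia

/-- The first `M` blocks of a forest. -/
def takeBlocks (φ : ℕ → CaretTree q) : ℕ → List (Block q)
  | 0 => []
  | M + 1 => (fun c => φ c) :: takeBlocks (fun i => φ (q + i)) M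
termination_by structural M => M

lemma length_takeBlocks (φ : ℕ → CaretTree q) (M : ℕ) : (takeBlocks φ M).length = M := by
  induction M generalizing φ with
  | zero => rfl
  | succ M ih => rw [takeBlocks, List.length_cons, ih]

lemma blockForest_takeBlocks (φ : ℕ → CaretTree q) {M i : ℕ} (h : i < M * q) :
    blockForest (takeBlocks φ M) i = φ i := by
  induction M generalizing φ i with
  | zero => lia
  | succ M ih =>
    rw [takeBlocks]
    rcases lt_or_ge i q with hi | hi
    · rw [blockForest_cons_of_lt _ _ hi]
    · obtain ⟨i, rfl⟩ := Nat.exists_eq_add_of_le hi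
      rw [blockForest_cons_add, ih _ (by rw [Nat.succ_mul] at h; lia)]

lemma listWeight_takeBlocks (φ : ℕ → CaretTree q) (M : ℕ) :
    listWeight blockWeight (takeBlocks φ M) =
      M + ∑ k ∈ Finset.range (M * q), (φ k).weight k := by
  induction M generalizing φ with
  | zero => simp [takeBlocks, listWeight]
  | succ M ih =>
    have hshift : ∑ k ∈ Finset.range (M * q), (φ (q + k)).weight (q + k) =
        ∑ k ∈ Finset.range (M * q), (φ (q + k)).weight k :=
      Finset.sum_congr rfl fun k _ => CaretTree.weight_congr _ (by simp)
    rw [takeBlocks, listWeight_cons, ih, blockWeight, Nat.succ_mul, add_comm (M * q),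
      Finset.sum_range_add, hshift, Fin.sum_univ_eq_sum_range fun k => (φ k).weight k]
    lia

lemma exists_eq_normalElem (hq : 0 < q) {g : FP (q + 1)} (hg : g ∈ Fplus (q + 1)) :
    ∃ a bs, a ≤ wlen (q + 1) g ∧ listWeight blockWeight bs ≤ wlen (q + 1) g + 1 ∧
      g = normalElem a bs := by
  obtain ⟨a, φ, M, haM, rfl, hM⟩ := exists_block_normalForm hq hg
  obtain ⟨l, hlen, hl⟩ := exists_wordElem_eq_of_wlen hq (shiftGen q ^ a * forestElem 0 φ (M * q))
  have hp (k : ℕ) (hk : k < M * q) :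
      Placed (wordElem l) (φ k) (leafOffset φ k) (k - a * q) [] := by
    rw [hl]
    exact placed_shiftGen_pow_mul_forestElem a φ hk
  have hroots : M - 1 ≤ ∑ k ∈ Finset.range (M * q), passages l (leafOffset φ k) := by
    calc M - 1 = ∑ b ∈ Finset.Ico 1 M, 1 := by simp
      _ ≤ ∑ b ∈ Finset.Ico 1 M, passages l (leafOffset φ (b * q)) :=
        Finset.sum_le_sum fun b hb => by
          obtain ⟨hb, hbM⟩ := Finset.mem_Ico.1 hb
          exact one_le_passages_blockRoot hq l hM hp hb hbM
      _ = ∑ k ∈ (Finset.Ico 1 M).image (· * q), passages l (leafOffset φ k) :=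
        (Finset.sum_image (f := fun k => passages l (leafOffset φ k))
          (mul_left_injective₀ hq.ne').injOn).symm
      _ ≤ _ := Finset.sum_le_sum_of_subset <| Finset.image_subset_iff.2 fun b hb =>
        Finset.mem_range.2 (Nat.mul_lt_mul_of_pos_right (Finset.mem_Ico.1 hb).2 hq)
  have hlength : ∑ k ∈ Finset.range (M * q), (passages l (leafOffset φ k) + (φ k).weight k) ≤
      l.length := by
    refine le_trans ?_ (sum_range_passages_le l (leafOffset φ (M * q)))
    rw [sum_range_leafOffset]
    refine Finset.sum_le_sum fun k hk => ?_
    rw [← CaretTree.weight_congr _ (leafOffset_modEq φ k)]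
    exact passages_add_weight_le hq l (hp k (Finset.mem_range.1 hk))
  rw [Finset.sum_add_distrib, hlen] at hlength
  refine ⟨a, takeBlocks φ M, by lia, ?_, ?_⟩
  · rw [listWeight_takeBlocks]
    lia
  · rw [normalElem, length_takeBlocks, forestElem_congr 0 fun i hi => blockForest_takeBlocks φ hi]

end LowerBound

/-! ### Counting the ball by blocks -/

section Counting

variable {q : ℕ}

lemma finite_setOf_wlen_le_and_mem (hq : 0 < q) (n : ℕ) :
    {g : FP (q + 1) | g ∈ Fplus (q + 1) ∧ wlen (q + 1) g ≤ n}.Finite :=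
  (finite_setOf_wlen_le hq n).subset fun _ => And.right

lemma mapsTo_blockElem (hq : 0 < q) (n : ℕ) :
    Set.MapsTo blockElem (wordsOfWeight (blockWeight (q := q)) n)
      {g | g ∈ Fplus (q + 1) ∧ wlen (q + 1) g ≤ n} := fun bs hbs =>
  ⟨normalElem_mem_Fplus _ bs, (wlen_blockElem_le hq bs).trans_eq hbs⟩

lemma wordsOfWeight_blockWeight_finite (hq : 0 < q) (n : ℕ) :
    (wordsOfWeight (blockWeight (q := q)) n).Finite :=
  (finite_setOf_wlen_le_and_mem hq n).of_injOn (mapsTo_blockElem hq n)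
    (blockElem_injective hq).injOn

lemma wordCount_le_card_ball (hq : 0 < q) (n : ℕ) :
    wordCount (blockWeight (q := q)) n ≤
      Nat.card {g : FP (q + 1) // g ∈ Fplus (q + 1) ∧ wlen (q + 1) g ≤ n} :=
  Set.ncard_le_ncard_of_injOn blockElem (mapsTo_blockElem hq n) (blockElem_injective hq).injOn
    (finite_setOf_wlen_le_and_mem hq n)

lemma card_ball_le (hq : 0 < q) (n : ℕ) :
    Nat.card {g : FP (q + 1) // g ∈ Fplus (q + 1) ∧ wlen (q + 1) g ≤ n} ≤
      (n + 1) * ∑ m ∈ Finset.range (n + 2), wordCount (blockWeight (q := q)) m := by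
  classical
  have hfin := wordsOfWeight_blockWeight_finite hq
  let A : Finset (ℕ × List (Block q)) :=
    Finset.range (n + 1) ×ˢ (Finset.range (n + 2)).biUnion fun m => (hfin m).toFinset
  have hsub : {g : FP (q + 1) | g ∈ Fplus (q + 1) ∧ wlen (q + 1) g ≤ n} ⊆
      A.image fun x => normalElem x.1 x.2 := by
    rintro g ⟨hg, hn⟩
    obtain ⟨a, bs, ha, hbs, rfl⟩ := exists_eq_normalElem hq hg
    refine Finset.mem_coe.2 (Finset.mem_image.2 ⟨(a, bs), ?_, rfl⟩)
    simp only [A, Finset.mem_product, Finset.mem_range, Finset.mem_biUnion,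
      Set.Finite.mem_toFinset]
    exact ⟨by lia, listWeight blockWeight bs, by lia, rfl⟩
  calc _ ≤ (A.image fun x => normalElem x.1 x.2).card :=
        (Set.ncard_le_ncard hsub (Finset.finite_toSet _)).trans_eq (Set.ncard_coe_finset _)
    _ ≤ A.card := Finset.card_image_le
    _ ≤ (n + 1) * ∑ m ∈ Finset.range (n + 2), (hfin m).toFinset.card := by
        rw [Finset.card_product, Finset.card_range]
        exact Nat.mul_le_mul_left _ Finset.card_biUnion_le
    _ = _ := by simp only [wordCount, Set.ncard_eq_toFinset_card _ (hfin _)]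

end Counting

/-! ### Generating functions of trees and blocks -/

section GeneratingFunctions

variable {q : ℕ} {t : ℝ}

/-- Joining `q + 1` trees by a caret, as an embedding. -/
def nodeEmbedding (q : ℕ) : (Fin (q + 1) → CaretTree q) ↪ CaretTree q where
  toFun := .node
  inj' _ _ := CaretTree.node.inj

lemma nodeEmbedding_apply (f : Fin (q + 1) → CaretTree q) : nodeEmbedding q f = .node f := rfl

/-- The trees of height at most `h`. -/
def treesUpTo (q : ℕ) : ℕ → Finset (CaretTree q)
  | 0 => {.leaf}
  | h + 1 => .cons .leaf ((Fintype.piFinset fun _ => treesUpTo q h).map (nodeEmbedding q))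
      (by simp [nodeEmbedding_apply])

lemma leaf_mem_treesUpTo (h : ℕ) : .leaf ∈ treesUpTo q h := by
  cases h <;> simp [treesUpTo]

lemma node_mem_treesUpTo_succ {h : ℕ} {f : Fin (q + 1) → CaretTree q} :
    .node f ∈ treesUpTo q (h + 1) ↔ ∀ k, f k ∈ treesUpTo q h := by
  simp [treesUpTo, nodeEmbedding_apply]

lemma monotone_treesUpTo : Monotone (treesUpTo q) := by
  refine monotone_nat_of_le_succ fun h => ?_
  induction h with
  | zero => exact Finset.singleton_subset_iff.2 (leaf_mem_treesUpTo 1)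
  | succ h ih =>
    rintro (_ | f) hT
    · exact leaf_mem_treesUpTo _
    · rw [node_mem_treesUpTo_succ] at hT ⊢
      exact fun k => ih (hT k)

lemma exists_mem_treesUpTo (T : CaretTree q) : ∃ h, T ∈ treesUpTo q h := by
  induction T with
  | leaf => exact ⟨0, leaf_mem_treesUpTo 0⟩
  | node f ih =>
    choose height hheight using ih
    exact ⟨Finset.univ.sup height + 1, node_mem_treesUpTo_succ.2 fun k =>
      monotone_treesUpTo (Finset.le_sup (Finset.mem_univ k)) (hheight k)⟩

/-- The generating function, by weight, of the trees of height at most `h` rooted at `m`. -/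
noncomputable def treeSum (q : ℕ) (t : ℝ) (h m : ℕ) : ℝ := ∑ T ∈ treesUpTo q h, t ^ T.weight m

lemma treeSum_zero (m : ℕ) : treeSum q t 0 m = 1 := by
  simp [treeSum, treesUpTo, CaretTree.weight]

lemma treeSum_congr (h : ℕ) {m n : ℕ} (hmn : m ≡ n [MOD q]) :
    treeSum q t h m = treeSum q t h n :=
  Finset.sum_congr rfl fun T _ => by rw [T.weight_congr hmn]

lemma treeSum_pos (ht : 0 < t) (h m : ℕ) : 0 < treeSum q t h m :=
  Finset.sum_pos (fun _ _ => pow_pos ht _) ⟨_, leaf_mem_treesUpTo h⟩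

lemma monotone_treeSum (ht : 0 < t) (m : ℕ) : Monotone fun h => treeSum q t h m :=
  fun _ _ hh => Finset.sum_le_sum_of_subset_of_nonneg (monotone_treesUpTo hh)
    fun _ _ _ => (pow_pos ht _).le

lemma prod_treeSum (h m : ℕ) : ∏ k : Fin (q + 1), treeSum q t h (m + k) =
    ∑ f ∈ Fintype.piFinset fun _ : Fin (q + 1) => treesUpTo q h, t ^ ∑ k, (f k).weight (m + k) := by
  simp only [treeSum, ← Finset.prod_pow_eq_pow_sum]
  exact Finset.prod_univ_sum (fun _ => treesUpTo q h)
    fun (k : Fin (q + 1)) T => t ^ T.weight (m + k)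

open Classical in
lemma prod_treeSum_of_leavesBeyondBlock (h m : ℕ) :
    (∏ k : Fin (q + 1), if q ≤ m % q + k then 1 else treeSum q t h (m + k)) =
      ∑ f ∈ Fintype.piFinset fun _ : Fin (q + 1) => treesUpTo q h,
        if LeavesBeyondBlock f (m % q) then t ^ ∑ k, (f k).weight (m + k) else 0 := by
  have hfactor (k : Fin (q + 1)) : (if q ≤ m % q + k then 1 else treeSum q t h (m + k)) =
      ∑ T ∈ treesUpTo q h, if q ≤ m % q + k ∧ T ≠ .leaf then 0 else t ^ T.weight (m + k) := by
    split_ifs with hk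
    · rw [Finset.sum_eq_single_of_mem _ (leaf_mem_treesUpTo h) fun T _ hT => if_pos ⟨hk, hT⟩]
      simp [CaretTree.weight]
    · simp only [treeSum, hk, false_and, if_false]
  simp only [hfactor]
  rw [Finset.prod_univ_sum (fun _ => treesUpTo q h) fun (k : Fin (q + 1)) T =>
    if q ≤ m % q + k ∧ T ≠ .leaf then (0 : ℝ) else t ^ T.weight (m + k)]
  refine Finset.sum_congr rfl fun f _ => ?_
  split_ifs with hf
  · rw [← Finset.prod_pow_eq_pow_sum]
    exact Finset.prod_congr rfl fun k _ => if_neg fun hk => hk.2 (hf k hk.1)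
  · obtain ⟨k, hk⟩ := not_forall.1 hf
    exact Finset.prod_eq_zero (Finset.mem_univ k) (if_pos (Classical.not_imp.1 hk))

lemma treeSum_succ (h m : ℕ) : treeSum q t (h + 1) m =
    1 + t * (t ^ 2 * ∏ k : Fin (q + 1), treeSum q t h (m + k) +
      (1 - t ^ 2) * ∏ k : Fin (q + 1), if q ≤ m % q + k then 1 else treeSum q t h (m + k)) := by
  rw [prod_treeSum, prod_treeSum_of_leavesBeyondBlock, Finset.mul_sum, Finset.mul_sum,
    ← Finset.sum_add_distrib, Finset.mul_sum, treeSum, treesUpTo, Finset.sum_cons,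
    Finset.sum_map, CaretTree.weight, pow_zero]
  congr 1
  refine Finset.sum_congr rfl fun f _ => ?_
  simp only [nodeEmbedding_apply, CaretTree.weight]
  split_ifs <;> ring

lemma prod_range_treeSum_add (ht : 0 < t) (h m : ℕ) :
    ∏ k ∈ Finset.range q, treeSum q t h (m + k) = ∏ k ∈ Finset.range q, treeSum q t h k := by
  induction m with
  | zero => simp
  | succ m ih =>
    rw [← ih]
    have hperiod : treeSum q t h (m + q) = treeSum q t h (m + 0) := treeSum_congr h (by simp)
    have hcycle := (Finset.prod_range_succ' (fun k => treeSum q t h (m + k)) q).symm.trans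
      (Finset.prod_range_succ _ q)
    rw [hperiod] at hcycle
    simpa only [add_assoc, add_comm 1] using mul_right_cancel₀ (treeSum_pos ht h _).ne' hcycle

/-- The operator on `q`-tuples whose least fixed point is the tuple of generating functions of all
trees rooted at the positions of a block. -/
def caretOp (q : ℕ) (t : ℝ) (X : ℕ → ℝ) (c : ℕ) : ℝ :=
  1 + t * (t ^ 2 * (X c * ∏ i ∈ Finset.range q, X i) +
    (1 - t ^ 2) * ∏ i ∈ Finset.Ico c q, X i)

lemma treeSum_succ_eq_caretOp (ht : 0 < t) (h : ℕ) {c : ℕ} (hc : c < q) :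
    treeSum q t (h + 1) c = caretOp q t (treeSum q t h) c := by
  rw [treeSum_succ, caretOp]
  congr 4
  · rw [Fin.prod_univ_eq_prod_range (fun k => treeSum q t h (c + k)), Finset.prod_range_succ,
      prod_range_treeSum_add ht, mul_comm, treeSum_congr h (by simp : c + q ≡ c [MOD q])]
  · rw [Fin.prod_univ_eq_prod_range fun k => if q ≤ c % q + k then 1 else treeSum q t h (c + k),
      Nat.mod_eq_of_lt hc, Finset.prod_Ico_eq_prod_range]
    have hsub : Finset.range (q - c) ⊆ Finset.range (q + 1) := Finset.range_mono (by lia)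
    rw [← Finset.prod_subset hsub fun k _ hk => if_pos (by rw [Finset.mem_range] at hk; lia)]
    exact Finset.prod_congr rfl fun k hk => if_neg (by rw [Finset.mem_range] at hk; lia)

lemma caretOp_le_caretOp (ht : 0 ≤ t) (ht₁ : t ≤ 1) {X Y : ℕ → ℝ} (hX : ∀ c < q, 0 ≤ X c)
    (hXY : ∀ c < q, X c ≤ Y c) {c : ℕ} (hc : c < q) : caretOp q t X c ≤ caretOp q t Y c := by
  have ht₂ : 0 ≤ 1 - t ^ 2 := sub_nonneg.2 (pow_le_one₀ ht ht₁)
  have hprod : ∏ i ∈ Finset.range q, X i ≤ ∏ i ∈ Finset.range q, Y i :=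
    Finset.prod_le_prod (fun i hi => hX i (Finset.mem_range.1 hi))
      fun i hi => hXY i (Finset.mem_range.1 hi)
  have htail : ∏ i ∈ Finset.Ico c q, X i ≤ ∏ i ∈ Finset.Ico c q, Y i :=
    Finset.prod_le_prod (fun i hi => hX i (Finset.mem_Ico.1 hi).2)
      fun i hi => hXY i (Finset.mem_Ico.1 hi).2
  have hprod₀ : 0 ≤ ∏ i ∈ Finset.range q, X i :=
    Finset.prod_nonneg fun i hi => hX i (Finset.mem_range.1 hi)
  have hY := (hX c hc).trans (hXY c hc)
  have hc := hXY c hc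
  unfold caretOp
  gcongr

lemma treeSum_le_of_caretOp_eq (ht : 0 < t) (ht₁ : t ≤ 1) {Y : ℕ → ℝ} (hY : ∀ c < q, 0 < Y c)
    (hfix : ∀ c < q, caretOp q t Y c = Y c) (h : ℕ) {c : ℕ} (hc : c < q) :
    treeSum q t h c ≤ Y c := by
  induction h generalizing c with
  | zero =>
    have ht₂ : 0 ≤ 1 - t ^ 2 := sub_nonneg.2 (pow_le_one₀ ht.le ht₁)
    have hprod : 0 ≤ ∏ i ∈ Finset.range q, Y i :=
      Finset.prod_nonneg fun i hi => (hY i (Finset.mem_range.1 hi)).le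
    have htail : 0 ≤ ∏ i ∈ Finset.Ico c q, Y i :=
      Finset.prod_nonneg fun i hi => (hY i (Finset.mem_Ico.1 hi).2).le
    have hYc := hY c hc
    rw [treeSum_zero, ← hfix c hc, caretOp, le_add_iff_nonneg_right]
    positivity
  | succ h ih =>
    rw [treeSum_succ_eq_caretOp ht h hc, ← hfix c hc]
    exact caretOp_le_caretOp ht.le ht₁ (fun c _ => (treeSum_pos ht h c).le) (fun _ => ih) hc

/-- The blocks consisting of trees of height at most `h`. -/
def blocksUpTo (q h : ℕ) : Finset (Block q) := Fintype.piFinset fun _ => treesUpTo q h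

lemma sum_blocksUpTo (h : ℕ) : ∑ β ∈ blocksUpTo q h, t ^ blockWeight β =
    t * ∏ c ∈ Finset.range q, treeSum q t h c := by
  rw [← Fin.prod_univ_eq_prod_range (treeSum q t h)]
  simp only [treeSum, blockWeight, pow_add, pow_one, ← Finset.prod_pow_eq_pow_sum,
    ← Finset.mul_sum]
  exact congrArg _ (Finset.prod_univ_sum (fun _ => treesUpTo q h)
    fun (c : Fin q) T => t ^ T.weight (c : ℕ)).symm

lemma exists_subset_blocksUpTo (S : Finset (Block q)) : ∃ h, S ⊆ blocksUpTo q h := by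
  choose height hheight using exists_mem_treesUpTo (q := q)
  let blockHeight (β : Block q) : ℕ := Finset.univ.sup fun c => height (β c)
  refine ⟨S.sup blockHeight, fun β hβ => Fintype.mem_piFinset.2 fun c => ?_⟩
  refine monotone_treesUpTo ?_ (hheight (β c))
  exact (Finset.le_sup (f := fun c => height (β c)) (Finset.mem_univ c)).trans
    (Finset.le_sup (f := blockHeight) hβ)

lemma hasSum_blockWeight (ht : 0 < t)
    (hle : ∀ h, t * ∏ c ∈ Finset.range q, treeSum q t h c ≤ 1)
    (hlim : Filter.Tendsto (fun h => t * ∏ c ∈ Finset.range q, treeSum q t h c)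
      Filter.atTop (nhds 1)) :
    HasSum (fun β : Block q => t ^ blockWeight β) 1 := by
  refine hasSum_of_isLUB_of_nonneg _ (fun β => (pow_pos ht _).le) ⟨?_, fun b hb => ?_⟩
  · rintro _ ⟨S, rfl⟩
    obtain ⟨h, hS⟩ := exists_subset_blocksUpTo S
    calc ∑ β ∈ S, t ^ blockWeight β ≤ ∑ β ∈ blocksUpTo q h, t ^ blockWeight β :=
          Finset.sum_le_sum_of_subset_of_nonneg hS fun _ _ _ => (pow_pos ht _).le
      _ ≤ 1 := (sum_blocksUpTo h).trans_le (hle h)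
  · exact le_of_tendsto' hlim fun h => (sum_blocksUpTo h).symm.trans_le (hb ⟨_, rfl⟩)

end GeneratingFunctions

/-! ### The fixed point of the caret operator -/

section FixedPoint

open Filter Topology

variable {q : ℕ} {t : ℝ}

/-- The reciprocal of the product of the generating functions of all trees rooted at the positions
`c, …, q - 1`; see `caretOp_tailInv_div`. -/
noncomputable def tailInv (q : ℕ) (t : ℝ) (c : ℕ) : ℝ :=
  ((1 + t - t ^ 2) * (1 - t ^ 2) ^ (q - c) - (1 - t ^ 2)) / t

lemma tailInv_self (ht : t ≠ 0) : tailInv q t q = 1 := by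
  rw [tailInv, Nat.sub_self, pow_zero]
  field_simp
  ring

lemma tailInv_zero (ht : t ≠ 0) (heq : (1 - t ^ 2) ^ q * (1 + t - t ^ 2) = 1) :
    tailInv q t 0 = t := by
  rw [tailInv, Nat.sub_zero, mul_comm, heq]
  field_simp
  ring

lemma tailInv_eq_of_lt (ht : t ≠ 0) {c : ℕ} (hc : c < q) :
    tailInv q t c = (1 - t ^ 2) * tailInv q t (c + 1) - t * (1 - t ^ 2) := by
  rw [tailInv, tailInv, show q - c = q - (c + 1) + 1 by lia, pow_succ]
  field_simp
  ring

lemma tailInv_pos (ht : 0 < t) (ht₁ : t < 1) (heq : (1 - t ^ 2) ^ q * (1 + t - t ^ 2) = 1)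
    (c : ℕ) : 0 < tailInv q t c := by
  have hr : 0 ≤ 1 - t ^ 2 := sub_nonneg.2 (pow_le_one₀ ht.le ht₁.le)
  have hpow : (1 - t ^ 2) ^ q ≤ (1 - t ^ 2) ^ (q - c) :=
    pow_le_pow_of_le_one hr (by nlinarith) (Nat.sub_le q c)
  have hle : tailInv q t 0 ≤ tailInv q t c := by
    unfold tailInv
    gcongr ?_ / t
    exact sub_le_sub_right (mul_le_mul_of_nonneg_left hpow (by linarith)) _
  exact ht.trans_le ((tailInv_zero ht.ne' heq).symm.trans_le hle)

lemma prod_Ico_div_of_ne_zero {f : ℕ → ℝ} (hf : ∀ i, f i ≠ 0) {m n : ℕ} (hmn : m ≤ n) :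
    ∏ i ∈ Finset.Ico m n, f (i + 1) / f i = f n / f m := by
  induction n, hmn using Nat.le_induction with
  | base => rw [Finset.Ico_self, Finset.prod_empty, div_self (hf m)]
  | succ n hmn ih =>
    rw [Finset.prod_Ico_succ_top hmn, ih, div_mul_div_comm, mul_comm, mul_div_mul_right _ _ (hf n)]

lemma prod_Ico_tailInv_div (ht : 0 < t) (ht₁ : t < 1)
    (heq : (1 - t ^ 2) ^ q * (1 + t - t ^ 2) = 1) {c : ℕ} (hc : c ≤ q) :
    ∏ i ∈ Finset.Ico c q, tailInv q t (i + 1) / tailInv q t i = (tailInv q t c)⁻¹ := by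
  rw [prod_Ico_div_of_ne_zero (fun i => (tailInv_pos ht ht₁ heq i).ne') hc,
    tailInv_self ht.ne', one_div]

lemma prod_range_tailInv_div (ht : 0 < t) (ht₁ : t < 1)
    (heq : (1 - t ^ 2) ^ q * (1 + t - t ^ 2) = 1) :
    ∏ i ∈ Finset.range q, tailInv q t (i + 1) / tailInv q t i = t⁻¹ := by
  rw [Finset.range_eq_Ico, prod_Ico_tailInv_div ht ht₁ heq q.zero_le, tailInv_zero ht.ne' heq]

lemma caretOp_tailInv_div (ht : 0 < t) (ht₁ : t < 1)
    (heq : (1 - t ^ 2) ^ q * (1 + t - t ^ 2) = 1) {c : ℕ} (hc : c < q) :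
    caretOp q t (fun i => tailInv q t (i + 1) / tailInv q t i) c =
      tailInv q t (c + 1) / tailInv q t c := by
  have hpos := tailInv_pos ht ht₁ heq c
  have hrec := tailInv_eq_of_lt ht.ne' hc
  rw [caretOp, prod_range_tailInv_div ht ht₁ heq, prod_Ico_tailInv_div ht ht₁ heq hc.le]
  field_simp
  linear_combination hrec

lemma inv_prod_Ico_of_caretOp_eq {X : ℕ → ℝ} (hX : ∀ c < q, 0 < X c)
    {c : ℕ} (hc : c < q) (hfix : caretOp q t X c = X c) :
    (∏ i ∈ Finset.Ico c q, X i)⁻¹ = (1 - t ^ 3 * ∏ i ∈ Finset.range q, X i) *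
      (∏ i ∈ Finset.Ico (c + 1) q, X i)⁻¹ - (t - t ^ 3) := by
  have hQ : 0 < ∏ i ∈ Finset.Ico (c + 1) q, X i :=
    Finset.prod_pos fun i hi => hX i (Finset.mem_Ico.1 hi).2
  have hXc := hX c hc
  rw [caretOp, Finset.prod_eq_prod_Ico_succ_bot hc] at hfix
  rw [Finset.prod_eq_prod_Ico_succ_bot hc]
  field_simp
  linear_combination hfix

lemma pow_mul_eq_of_caretOp_eq {X : ℕ → ℝ} (hX : ∀ c < q, 0 < X c)
    (hfix : ∀ c < q, caretOp q t X c = X c) {κ : ℝ}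
    (hκ : κ = 1 - t ^ 3 * ∏ i ∈ Finset.range q, X i) :
    κ ^ q * (1 + t - t ^ 3 - κ) = t := by
  have htail (n : ℕ) (hn : n ≤ q) : (1 - κ) * (∏ i ∈ Finset.Ico (q - n) q, X i)⁻¹ +
      (t - t ^ 3) = κ ^ n * (1 + t - t ^ 3 - κ) := by
    induction n with
    | zero => simp; ring
    | succ n ih =>
      have hlt : q - (n + 1) < q := by lia
      rw [inv_prod_Ico_of_caretOp_eq hX hlt (hfix _ hlt), ← hκ,
        show q - (n + 1) + 1 = q - n by lia, pow_succ]
      linear_combination κ * ih (by lia)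
  have hP : 0 < ∏ i ∈ Finset.range q, X i :=
    Finset.prod_pos fun i hi => hX i (Finset.mem_range.1 hi)
  rw [← htail q le_rfl, Nat.sub_self, ← Finset.range_eq_Ico, hκ]
  field_simp
  ring

lemma pow_mul_sub_lt_pow_mul_sub {n : ℕ} {x y s : ℝ} (hx : 0 ≤ x) (hxy : x < y) (hxs : x ≤ s)
    (hs : n * (s - x) < y) : y ^ n * (s - y) < x ^ n * (s - x) := by
  have hy : 0 < y := hx.trans_lt hxy
  have hbernoulli : 1 + n * (x / y - 1) ≤ (x / y) ^ n := by
    have hxy₀ : 0 ≤ x / y := by positivity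
    simpa only [add_sub_cancel] using one_add_mul_le_pow (a := x / y - 1) (by linarith) n
  have hlt : s - y < (1 + n * (x / y - 1)) * (s - x) := by
    have hgap : n * (s - x) / y * (y - x) < 1 * (y - x) :=
      mul_lt_mul_of_pos_right ((div_lt_one hy).2 hs) (sub_pos.2 hxy)
    calc s - y = (s - x) - 1 * (y - x) := by ring
      _ < (s - x) - n * (s - x) / y * (y - x) := sub_lt_sub_left hgap _
      _ = (1 + n * (x / y - 1)) * (s - x) := by field_simp; ring
  calc y ^ n * (s - y) < y ^ n * ((1 + n * (x / y - 1)) * (s - x)) := by gcongr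
    _ ≤ y ^ n * ((x / y) ^ n * (s - x)) := by
      gcongr
    _ = x ^ n * (s - x) := by rw [← mul_assoc, ← mul_pow, mul_div_cancel₀ _ hy.ne']

lemma eq_one_sub_sq_of_pow_mul_eq (ht : 0 < t) (htq : (q + 1) * t < 1)
    (heq : (1 - t ^ 2) ^ q * (1 + t - t ^ 2) = 1) {κ : ℝ} (hκ : 1 - t ^ 2 ≤ κ)
    (h : κ ^ q * (1 + t - t ^ 3 - κ) = t) : κ = 1 - t ^ 2 := by
  refine (hκ.eq_or_lt.resolve_right fun hlt => ?_).symm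
  have ht₁ : t < 1 := by nlinarith [mul_nonneg q.cast_nonneg ht.le]
  have hgap : 1 + t - t ^ 3 - (1 - t ^ 2) = t * (1 + t - t ^ 2) := by ring
  have hslope : q * (1 + t - t ^ 3 - (1 - t ^ 2)) < κ := calc
    (q : ℝ) * (1 + t - t ^ 3 - (1 - t ^ 2)) = q * t * (1 + t - t ^ 2) := by rw [hgap]; ring
    _ ≤ (1 - t) * (1 + t - t ^ 2) := by
      gcongr
      · nlinarith
      · linarith
    _ ≤ 1 - t ^ 2 := by nlinarith [mul_pos (pow_pos ht 2) (sub_pos.2 ht₁)]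
    _ < κ := hlt
  refine (pow_mul_sub_lt_pow_mul_sub (by nlinarith) hlt ?_ hslope).ne ?_
  · rw [← sub_nonneg, hgap]
    exact mul_nonneg ht.le (by nlinarith)
  · rw [h, hgap]
    linear_combination -t * heq

lemma mul_prod_eq_one_of_caretOp_eq (ht : 0 < t) (htq : (q + 1) * t < 1)
    (heq : (1 - t ^ 2) ^ q * (1 + t - t ^ 2) = 1) {X : ℕ → ℝ} (hX : ∀ c < q, 0 < X c)
    (hfix : ∀ c < q, caretOp q t X c = X c) (hle : t * ∏ i ∈ Finset.range q, X i ≤ 1) :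
    t * ∏ i ∈ Finset.range q, X i = 1 := by
  have hκ : 1 - t ^ 2 ≤ 1 - t ^ 3 * ∏ i ∈ Finset.range q, X i := by
    nlinarith [mul_le_mul_of_nonneg_left hle (sq_nonneg t)]
  have hunique := eq_one_sub_sq_of_pow_mul_eq ht htq heq hκ (pow_mul_eq_of_caretOp_eq hX hfix rfl)
  refine mul_left_cancel₀ (pow_pos ht 2).ne' ?_
  linear_combination -hunique

lemma mul_prod_treeSum_le_one (ht : 0 < t) (ht₁ : t < 1)
    (heq : (1 - t ^ 2) ^ q * (1 + t - t ^ 2) = 1) (h : ℕ) :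
    t * ∏ c ∈ Finset.range q, treeSum q t h c ≤ 1 := by
  have hpos := tailInv_pos ht ht₁ heq
  have hprod : ∏ c ∈ Finset.range q, treeSum q t h c ≤ t⁻¹ := by
    rw [← prod_range_tailInv_div ht ht₁ heq]
    exact Finset.prod_le_prod (fun c _ => (treeSum_pos ht h c).le) fun c hc =>
      treeSum_le_of_caretOp_eq ht ht₁.le (fun i _ => div_pos (hpos (i + 1)) (hpos i))
        (fun i => caretOp_tailInv_div ht ht₁ heq) h (Finset.mem_range.1 hc)
  calc t * ∏ c ∈ Finset.range q, treeSum q t h c ≤ t * t⁻¹ := by gcongr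
    _ = 1 := mul_inv_cancel₀ ht.ne'

lemma exists_tendsto_treeSum (ht : 0 < t) (ht₁ : t < 1)
    (heq : (1 - t ^ 2) ^ q * (1 + t - t ^ 2) = 1) :
    ∃ X : ℕ → ℝ, (∀ c < q, 0 < X c) ∧
      ∀ c < q, Tendsto (fun h => treeSum q t h c) atTop (𝓝 (X c)) := by
  have hpos := tailInv_pos ht ht₁ heq
  have hbdd {c : ℕ} (hc : c < q) : BddAbove (Set.range fun h => treeSum q t h c) :=
    ⟨_, Set.forall_mem_range.2 fun h => treeSum_le_of_caretOp_eq ht ht₁.le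
      (fun i _ => div_pos (hpos (i + 1)) (hpos i)) (fun i => caretOp_tailInv_div ht ht₁ heq) h hc⟩
  exact ⟨fun c => ⨆ h, treeSum q t h c,
    fun c hc => (treeSum_pos ht 0 c).trans_le (le_ciSup (hbdd hc) 0),
    fun c hc => tendsto_atTop_ciSup (monotone_treeSum ht c) (hbdd hc)⟩

lemma tendsto_mul_prod_treeSum (ht : 0 < t) (htq : (q + 1) * t < 1)
    (heq : (1 - t ^ 2) ^ q * (1 + t - t ^ 2) = 1) :
    Tendsto (fun h => t * ∏ c ∈ Finset.range q, treeSum q t h c) atTop (𝓝 1) := by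
  have ht₁ : t < 1 := by nlinarith [mul_nonneg q.cast_nonneg ht.le]
  obtain ⟨X, hX, hlim⟩ := exists_tendsto_treeSum ht ht₁ heq
  have hprod : Tendsto (fun h => ∏ c ∈ Finset.range q, treeSum q t h c) atTop
      (𝓝 (∏ c ∈ Finset.range q, X c)) :=
    tendsto_finsetProd _ fun c hc => hlim c (Finset.mem_range.1 hc)
  have hfix (c : ℕ) (hc : c < q) : caretOp q t X c = X c := by
    have hop : Tendsto (fun h => caretOp q t (treeSum q t h) c) atTop (𝓝 (caretOp q t X c)) :=
      ((((hlim c hc).mul hprod).const_mul _).add ((tendsto_finsetProd _ fun i hi =>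
        hlim i (Finset.mem_Ico.1 hi).2).const_mul _)).const_mul _ |>.const_add _
    simp only [← treeSum_succ_eq_caretOp ht _ hc] at hop
    exact tendsto_nhds_unique hop ((hlim c hc).comp (tendsto_add_atTop_nat 1))
  have hle : t * ∏ c ∈ Finset.range q, X c ≤ 1 :=
    le_of_tendsto' (hprod.const_mul t) (mul_prod_treeSum_le_one ht ht₁ heq)
  simpa only [mul_prod_eq_one_of_caretOp_eq ht htq heq hX hfix hle] using hprod.const_mul t

end FixedPoint

/-! ### The growth rate -/

section GrowthRate

variable {q : ℕ}

lemma sq_sub_one_pow_mul_eq {y : ℝ} (hy : y ≠ 0) : (y ^ 2 - 1) ^ q * (y ^ 2 + y - 1) =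
    y ^ (2 * (q + 1)) * ((1 - y⁻¹ ^ 2) ^ q * (1 + y⁻¹ - y⁻¹ ^ 2)) := by
  have h₁ : y ^ 2 - 1 = y ^ 2 * (1 - y⁻¹ ^ 2) := by field_simp
  have h₂ : y ^ 2 + y - 1 = y ^ 2 * (1 + y⁻¹ - y⁻¹ ^ 2) := by field_simp
  rw [h₁, h₂, mul_pow]
  ring

lemma pow_mul_lt_one_of_add_one_mul_eq (hq : 0 < q) {t : ℝ} (ht : (q + 1) * t = 1) :
    (1 - t ^ 2) ^ q * (1 + t - t ^ 2) < 1 := by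
  have hq₁ : (1 : ℝ) ≤ q := mod_cast hq
  have ht₀ : 0 < t := pos_of_mul_pos_right (ht ▸ one_pos) (by positivity)
  have ht₁ : 0 < 1 - t ^ 2 := by nlinarith
  calc (1 - t ^ 2) ^ q * (1 + t - t ^ 2) = (1 - t ^ 2) ^ q * (1 + q * t ^ 2) := by
        congr 1
        linear_combination -t * ht
    _ ≤ (1 - t ^ 2) ^ q * (1 + t ^ 2) ^ q := by
        gcongr
        exact one_add_mul_le_pow (by nlinarith) q
    _ = (1 - t ^ 4) ^ q := by
        rw [← mul_pow]
        ring
    _ < 1 := pow_lt_one₀ (by nlinarith) (sub_lt_self _ (by positivity)) hq.ne'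

lemma one_lt_pow_mul_of_add_mul_eq {t : ℝ} (ht : (q + 3 / 2) * t = 1) :
    1 < (1 - t ^ 2) ^ q * (1 + t - t ^ 2) := by
  have ht₀ : 0 < t := pos_of_mul_pos_right (ht ▸ one_pos) (by positivity)
  have hqt : q * t = 1 - 3 / 2 * t := by linear_combination ht
  have ht₁ : t < 1 := by nlinarith [mul_nonneg q.cast_nonneg ht₀.le]
  have hsub : 0 < 1 - t := by linarith
  have hsub₂ : 0 < 2 - t := by linarith
  have hfirst : 0 < 1 - t ^ 2 := by nlinarith
  have hsecond : 0 < 1 + (t - t ^ 2) := by nlinarith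
  have hgap : (q : ℝ) * (1 - (1 - t ^ 2)⁻¹) + 2 * (t - t ^ 2) / (t - t ^ 2 + 2) =
      t ^ 3 / (2 * ((1 - t) * (1 + t) * (2 - t))) := by
    have hleft : (q : ℝ) * (1 - (1 - t ^ 2)⁻¹) = -(q * t * t / ((1 - t) * (1 + t))) := by
      rw [show 1 - t ^ 2 = (1 - t) * (1 + t) by ring]
      field_simp
      ring
    rw [hleft, hqt, show t - t ^ 2 + 2 = (2 - t) * (1 + t) by ring]
    field_simp
    ring
  have hlog : 0 < Real.log ((1 - t ^ 2) ^ q * (1 + (t - t ^ 2))) := calc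
    0 < t ^ 3 / (2 * ((1 - t) * (1 + t) * (2 - t))) := by positivity
    _ = q * (1 - (1 - t ^ 2)⁻¹) + 2 * (t - t ^ 2) / (t - t ^ 2 + 2) := hgap.symm
    _ ≤ q * Real.log (1 - t ^ 2) + Real.log (1 + (t - t ^ 2)) := by
      gcongr
      · exact Real.one_sub_inv_le_log_of_pos hfirst
      · exact Real.le_log_one_add_of_nonneg (by nlinarith)
    _ = _ := by rw [Real.log_mul (by positivity) hsecond.ne', Real.log_pow]
  rw [add_sub_assoc]
  exact (Real.log_pos_iff (by positivity)).1 hlog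

lemma exists_root (hq : 0 < q) : ∃ ζ : ℝ, (q + 1 : ℝ) < ζ ∧ ζ < (q + 1 : ℝ) + 1 / 2 ∧
    (ζ ^ 2 - 1) ^ q * (ζ ^ 2 + ζ - 1) = ζ ^ (2 * (q + 1)) := by
  let f (y : ℝ) : ℝ := (y ^ 2 - 1) ^ q * (y ^ 2 + y - 1) - y ^ (2 * (q + 1))
  have hf : Continuous f := by fun_prop
  have hfactor {y : ℝ} (hy : y ≠ 0) : f y =
      y ^ (2 * (q + 1)) * ((1 - y⁻¹ ^ 2) ^ q * (1 + y⁻¹ - y⁻¹ ^ 2) - 1) := by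
    simp only [f, sq_sub_one_pow_mul_eq hy]
    ring
  have hneg : f (q + 1) < 0 := by
    rw [hfactor (by positivity)]
    exact mul_neg_of_pos_of_neg (by positivity)
      (sub_neg.2 (pow_mul_lt_one_of_add_one_mul_eq hq (mul_inv_cancel₀ (by positivity))))
  have hpos : 0 < f (q + 1 + 1 / 2) := by
    rw [hfactor (by positivity)]
    refine mul_pos (by positivity) (sub_pos.2 (one_lt_pow_mul_of_add_mul_eq ?_))
    field_simp
    ring
  obtain ⟨ζ, ⟨hlt, hgt⟩, hζ⟩ := intermediate_value_Ioo
    (by linarith : (q + 1 : ℝ) ≤ q + 1 + 1 / 2) hf.continuousOn ⟨hneg, hpos⟩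
  exact ⟨ζ, hlt, hgt, sub_eq_zero.1 hζ⟩

lemma hasSum_blockWeight_of_root {ζ : ℝ} (hlt : (q + 1 : ℝ) < ζ)
    (hroot : (ζ ^ 2 - 1) ^ q * (ζ ^ 2 + ζ - 1) = ζ ^ (2 * (q + 1))) :
    HasSum (fun β : Block q => ζ⁻¹ ^ blockWeight β) 1 := by
  have hζ : 0 < ζ := by linarith [q.cast_nonneg (α := ℝ)]
  have hinv : 0 < ζ⁻¹ := inv_pos.2 hζ
  have htq : (q + 1) * ζ⁻¹ < 1 := (mul_inv_lt_iff₀ hζ).2 (by rwa [one_mul])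
  have hinv₁ : ζ⁻¹ < 1 := inv_lt_one_of_one_lt₀ (by linarith [q.cast_nonneg (α := ℝ)])
  have heq : (1 - ζ⁻¹ ^ 2) ^ q * (1 + ζ⁻¹ - ζ⁻¹ ^ 2) = 1 :=
    (mul_eq_left₀ (pow_pos hζ _).ne').1 ((sq_sub_one_pow_mul_eq hζ.ne').symm.trans hroot)
  exact hasSum_blockWeight hinv (mul_prod_treeSum_le_one hinv hinv₁ heq)
    (tendsto_mul_prod_treeSum hinv htq heq)

end GrowthRate

end GeneralizedThompson

open GeneralizedThompson

/-- Theorem 4.4: the growth rate of the monoid `F₊(p)` of positive elements of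
`F(p)` (with respect to the generators `x_0, …, x_{p−1}` of `F(p)`) exists,
lies strictly between `p` and `p + 1/2`, and satisfies
`(ζ² − 1)^{p−1}(ζ² + ζ − 1) = ζ^{2p}`. -/
theorem stmt13 (p : ℕ) (hp : 2 ≤ p) :
    ∃ ζ : ℝ,
      Filter.Tendsto
        (fun n : ℕ =>
          (Nat.card {g : FP p // g ∈ Fplus p ∧ wlen p g ≤ n} : ℝ) ^ ((n : ℝ)⁻¹))
        Filter.atTop (nhds ζ) ∧
      (p : ℝ) < ζ ∧ ζ < (p : ℝ) + 1 / 2 ∧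
      (ζ ^ 2 - 1) ^ (p - 1) * (ζ ^ 2 + ζ - 1) = ζ ^ (2 * p) := by
  obtain ⟨q, rfl⟩ := Nat.exists_eq_add_of_le' (one_le_two.trans hp)
  have hq : 0 < q := by lia
  obtain ⟨ζ, hlt, hgt, hroot⟩ := exists_root hq
  have hζ : 1 ≤ ζ := by linarith [q.cast_nonneg (α := ℝ)]
  have hleaf : blockWeight (fun _ => .leaf : Block q) = 1 := by
    simp [blockWeight, CaretTree.weight]
  refine ⟨ζ, ?_, by rwa [Nat.cast_add_one], by rwa [Nat.cast_add_one], hroot⟩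
  exact tendsto_rpow_inv_of_wordCount_le blockWeight_pos hleaf hζ
    (hasSum_blockWeight_of_root hlt hroot) (wordCount_le_card_ball hq) (card_ball_le hq)
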